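/- Interior quantitative strong maximum principle. For every integer n ≥ 2, reals 0 < λ ≤ Λ, exponent q > n, K > 0, and every r ∈ (0,1), there exist constants ε > 0 and c_r > 0 such that the following holds. Let b : B₁ → ℝ be continuous with b ≥ 0 and ‖b‖_{L^q(B₁)} ≤ K, and let u be a C² function on B₁ with u ≥ 0 such that g(x) := 𝓜⁻(D²u(x)) − b(x)|Du(x)| ≤ 0 for all x ∈ B₁. Then c_r·(∫_{B₁} (−g(x))^ε dx)^{1/ε} ≤ inf_{x ∈ B_r} u(x), the integral being a Lebesgue integral with values in [0,+∞]. -/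

import Mathlib

open MeasureTheory
open scoped ENNReal

/-- The Pucci minimal extremal operator `𝓜⁻(M)` with ellipticity constants `lam ≤ Lam`:
the infimum of `tr(A*M)` over symmetric matrices `A` with `lam•I ≤ A ≤ Lam•I`. -/
noncomputable def pucciMinus (n : ℕ) (lam Lam : ℝ) (M : Matrix (Fin n) (Fin n) ℝ) : ℝ :=
  sInf { t : ℝ | ∃ A : Matrix (Fin n) (Fin n) ℝ, A.IsSymm ∧
    (A - lam • (1 : Matrix (Fin n) (Fin n) ℝ)).PosSemidef ∧
    (Lam • (1 : Matrix (Fin n) (Fin n) ℝ) - A).PosSemidef ∧ t = (A * M).trace }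

/-- The Pucci maximal extremal operator `𝓜⁺(M)`. -/
noncomputable def pucciPlus (n : ℕ) (lam Lam : ℝ) (M : Matrix (Fin n) (Fin n) ℝ) : ℝ :=
  sSup { t : ℝ | ∃ A : Matrix (Fin n) (Fin n) ℝ, A.IsSymm ∧
    (A - lam • (1 : Matrix (Fin n) (Fin n) ℝ)).PosSemidef ∧
    (Lam • (1 : Matrix (Fin n) (Fin n) ℝ) - A).PosSemidef ∧ t = (A * M).trace }

/-- The Hessian matrix `D²u(x)` of `u` at `x`. -/
noncomputable def hess (n : ℕ) (u : EuclideanSpace ℝ (Fin n) → ℝ)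
    (x : EuclideanSpace ℝ (Fin n)) : Matrix (Fin n) (Fin n) ℝ :=
  fun i j => fderiv ℝ (fun y => fderiv ℝ u y (EuclideanSpace.single j (1 : ℝ))) x
    (EuclideanSpace.single i (1 : ℝ))

/-- The euclidean norm `|Du(x)|` of the gradient of `u` at `x`. -/
noncomputable def gradNorm (n : ℕ) (u : EuclideanSpace ℝ (Fin n) → ℝ)
    (x : EuclideanSpace ℝ (Fin n)) : ℝ := ‖fderiv ℝ u x‖

/-- The `L^p` norm `(∫_E |g|^p)^(1/p)`, as a Lebesgue integral valued in `[0,∞]`. -/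
noncomputable def LpNormE (n : ℕ) (p : ℝ) (g : EuclideanSpace ℝ (Fin n) → ℝ)
    (E : Set (EuclideanSpace ℝ (Fin n))) : ℝ≥0∞ :=
  (∫⁻ x in E, ENNReal.ofReal (|g x| ^ p)) ^ (1 / p)

/-- The last (`n`-th) coordinate `x_n` of a point of `ℝⁿ`. -/
def lastC (n : ℕ) (hn : 1 ≤ n) (x : EuclideanSpace ℝ (Fin n)) : ℝ := x ⟨n - 1, by omega⟩

/-- The open half-ball `B_R⁺ = {|x| < R, x_n > 0}`. -/
def halfBall (n : ℕ) (hn : 1 ≤ n) (R : ℝ) : Set (EuclideanSpace ℝ (Fin n)) :=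
  {x | ‖x‖ < R ∧ 0 < lastC n hn x}

/-- The flat boundary part `B_R⁰ = {|x| ≤ R, x_n = 0}`. -/
def flatB (n : ℕ) (hn : 1 ≤ n) (R : ℝ) : Set (EuclideanSpace ℝ (Fin n)) :=
  {x | ‖x‖ ≤ R ∧ lastC n hn x = 0}

/-- The norm `‖g‖_{L^{p,q}(B_R⁺)} = ‖g‖_{L^p(B_R⁺)} + ‖g‖_{L^q(B_R⁺ ∩ {x_n < d0})}`. -/
noncomputable def LpqNormHB (n : ℕ) (hn : 1 ≤ n) (p q d0 R : ℝ)
    (g : EuclideanSpace ℝ (Fin n) → ℝ) : ℝ≥0∞ :=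
  LpNormE n p g (halfBall n hn R) +
    LpNormE n q g {x ∈ halfBall n hn R | lastC n hn x < d0}

/-- The open cube `Q_ρ` of side `ρ` centered at `(0,…,0,ρ/2)`. -/
def cubeQ (n : ℕ) (hn : 1 ≤ n) (ρ : ℝ) : Set (EuclideanSpace ℝ (Fin n)) :=
  {x | (∀ i : Fin n, i.1 ≠ n - 1 → |x i| < ρ / 2) ∧ 0 < lastC n hn x ∧ lastC n hn x < ρ}

/-- The norm `‖g‖_{L^{p,q}(Q₂)} = ‖g‖_{L^p(Q₂)} + ‖g‖_{L^q(Q₂ ∩ {x_n < d0})}`. -/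
noncomputable def LpqNormQ (n : ℕ) (hn : 1 ≤ n) (p q d0 : ℝ)
    (g : EuclideanSpace ℝ (Fin n) → ℝ) : ℝ≥0∞ :=
  LpNormE n p g (cubeQ n hn 2) +
    LpNormE n q g {x ∈ cubeQ n hn 2 | lastC n hn x < d0}

namespace QSMP

/-- Euclidean space abbreviation. -/
abbrev EE (n : ℕ) := EuclideanSpace ℝ (Fin n)

open scoped MatrixOrder Matrix.Norms.L2Operator in
lemma trace_mul_psd {n : ℕ} {A B : Matrix (Fin n) (Fin n) ℝ} (hA : A.PosSemidef)
    (hB : B.PosSemidef) : 0 ≤ (A * B).trace := by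
  obtain ⟨C, rfl⟩ := CStarAlgebra.nonneg_iff_eq_star_mul_self.mp hB.nonneg
  rw [Matrix.star_eq_conjTranspose]
  rw [← Matrix.mul_assoc, Matrix.trace_mul_comm, ← Matrix.mul_assoc]
  exact (hA.mul_mul_conjTranspose_same C).trace_nonneg

lemma det_le_trace_pow {n : ℕ} {A : Matrix (Fin n) (Fin n) ℝ} (hA : A.PosSemidef) :
    |A.det| ≤ A.trace ^ n := by
  rw [abs_of_nonneg hA.det_nonneg, hA.1.det_eq_prod_eigenvalues, hA.1.trace_eq_sum_eigenvalues]
  simp only [RCLike.ofReal_real_eq_id, id]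
  calc ∏ i, hA.1.eigenvalues i ≤ ∏ _i : Fin n, ∑ j, hA.1.eigenvalues j := by
        apply Finset.prod_le_prod
        · intro i _; exact hA.eigenvalues_nonneg i
        · intro i _
          exact Finset.single_le_sum (fun j _ => hA.eigenvalues_nonneg j) (Finset.mem_univ i)
    _ = _ := by simp

/-- admissible matrices -/
def Adm (n : ℕ) (lam Lam : ℝ) (A : Matrix (Fin n) (Fin n) ℝ) : Prop :=
  A.IsSymm ∧ (A - lam • (1 : Matrix (Fin n) (Fin n) ℝ)).PosSemidef ∧
    (Lam • (1 : Matrix (Fin n) (Fin n) ℝ) - A).PosSemidef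

lemma adm_lam {n : ℕ} {lam Lam : ℝ} (h : lam ≤ Lam) :
    Adm n lam Lam (lam • (1 : Matrix (Fin n) (Fin n) ℝ)) := by
  refine ⟨?_, ?_, ?_⟩
  · exact (Matrix.isSymm_one).smul lam
  · rw [sub_self]; exact Matrix.PosSemidef.zero
  · rw [← sub_smul]; exact Matrix.PosSemidef.one.smul (by linarith)

lemma le_pucci {n : ℕ} {lam Lam : ℝ} (h : lam ≤ Lam) {N : Matrix (Fin n) (Fin n) ℝ} {c : ℝ}
    (hc : ∀ A, Adm n lam Lam A → c ≤ (A * N).trace) : c ≤ pucciMinus n lam Lam N := by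
  apply le_csInf
  · exact ⟨_, _, (adm_lam h).1, (adm_lam h).2.1, (adm_lam h).2.2, rfl⟩
  · rintro t ⟨A, h1, h2, h3, rfl⟩
    exact hc A ⟨h1, h2, h3⟩

lemma trace_sub_le {n : ℕ} {lam Lam : ℝ} (h : lam ≤ Lam) {N S : Matrix (Fin n) (Fin n) ℝ}
    {B c : ℝ} (hP : (N - S).PosSemidef) (hN : pucciMinus n lam Lam N ≤ B)
    (hS : ∀ A, Adm n lam Lam A → - c ≤ (A * S).trace) :
    lam * (N - S).trace ≤ B + c := by
  apply le_of_forall_pos_le_add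
  intro η hη
  have hlt : pucciMinus n lam Lam N < B + η := by linarith
  unfold pucciMinus at hlt
  obtain ⟨t, ⟨A, h1, h2, h3, rfl⟩, ht⟩ := exists_lt_of_csInf_lt
    (by exact ⟨_, _, (adm_lam h).1, (adm_lam h).2.1, (adm_lam h).2.2, rfl⟩) hlt
  have h4 := trace_mul_psd h2 hP
  have h5 := hS A ⟨h1, h2, h3⟩
  rw [Matrix.sub_mul, Matrix.trace_sub, Matrix.smul_mul, Matrix.one_mul, Matrix.trace_smul,
    Matrix.mul_sub, Matrix.trace_sub, smul_eq_mul] at h4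
  linarith

lemma adm_trace_le {n : ℕ} {lam Lam : ℝ} {A : Matrix (Fin n) (Fin n) ℝ} (hA : Adm n lam Lam A) :
    A.trace ≤ n * Lam := by
  have := hA.2.2.trace_nonneg
  rw [Matrix.trace_sub, Matrix.trace_smul, Matrix.trace_one] at this
  simp at this
  linarith

lemma adm_psd {n : ℕ} {lam Lam : ℝ} (hl : 0 ≤ lam) {A : Matrix (Fin n) (Fin n) ℝ}
    (hA : Adm n lam Lam A) : A.PosSemidef := by
  have := hA.2.1.add (Matrix.PosSemidef.one.smul hl)
  simpa using this

/-- the matrix `z zᵀ` has trace against `A` at least `lam |z|^2`. -/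
lemma adm_trace_vec {n : ℕ} {lam Lam : ℝ} {A : Matrix (Fin n) (Fin n) ℝ} (hA : Adm n lam Lam A)
    (z : EE n) : lam * ‖z‖ ^ 2 ≤ (A * Matrix.of (fun i j => z i * z j)).trace := by
  have hz : (Matrix.of (fun i j => z i * z j)).PosSemidef := by
    have := Matrix.posSemidef_vecMulVec_self_star (R := ℝ) (fun i => z i)
    convert this using 1
    ext i j
    simp [Matrix.vecMulVec_apply]
  have h4 := trace_mul_psd hA.2.1 hz
  rw [Matrix.sub_mul, Matrix.trace_sub, Matrix.smul_mul, Matrix.one_mul, Matrix.trace_smul,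
    smul_eq_mul] at h4
  have : (Matrix.of (fun i j => z i * z j)).trace = ‖z‖ ^ 2 := by
    rw [EuclideanSpace.norm_sq_eq]
    simp [Matrix.trace, pow_two]
  rw [this] at h4
  linarith

lemma adm_trace_S {n : ℕ} {lam Lam : ℝ}
    {A : Matrix (Fin n) (Fin n) ℝ} (hA : Adm n lam Lam A)
    (z : EE n) {α β : ℝ} (hα : 0 ≤ α) (hβ : 0 ≤ β) :
    -(α * (n * Lam)) + β * (lam * ‖z‖ ^ 2) ≤
      (A * (-(α • (1 : Matrix (Fin n) (Fin n) ℝ)) + β • Matrix.of (fun i j => z i * z j))).trace := by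
  rw [Matrix.mul_add, Matrix.trace_add, Matrix.mul_neg, Matrix.trace_neg, Matrix.mul_smul,
    Matrix.mul_smul, Matrix.trace_smul, Matrix.trace_smul, Matrix.mul_one, smul_eq_mul, smul_eq_mul]
  have h1 := mul_le_mul_of_nonneg_left (adm_trace_le hA) hα
  have h2 := mul_le_mul_of_nonneg_left (adm_trace_vec hA z) hβ
  linarith

/-- lower bound for the Pucci operator -/
lemma pucci_lower {n : ℕ} {lam Lam : ℝ} (hl : 0 ≤ lam) (h : lam ≤ Lam)
    {N : Matrix (Fin n) (Fin n) ℝ} {a : ℝ} (ha : 0 ≤ a)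
    (hN : (N + a • (1 : Matrix (Fin n) (Fin n) ℝ)).PosSemidef) :
    -(a * (n * Lam)) ≤ pucciMinus n lam Lam N := by
  apply le_pucci h
  intro A hA
  have h1 := trace_mul_psd (adm_psd hl hA) hN
  rw [Matrix.mul_add, Matrix.trace_add, Matrix.mul_smul, Matrix.trace_smul, Matrix.mul_one,
    smul_eq_mul] at h1
  have h2 := mul_le_mul_of_nonneg_left (adm_trace_le hA) ha
  linarith

end QSMP
namespace QSMP

open InnerProductSpace Filter Topology

variable {n : ℕ}

lemma gradNorm_eq (u : EE n → ℝ) (x : EE n) : gradNorm n u x = ‖gradient u x‖ := by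
  unfold gradNorm gradient
  simp

lemma hasGradientAt_of {u : EE n → ℝ} (hu : ContDiffOn ℝ 2 u (Metric.ball 0 1)) {x : EE n}
    (hx : x ∈ Metric.ball (0 : EE n) 1) : HasGradientAt u (gradient u x) x := by
  have h := (hu.contDiffAt (Metric.isOpen_ball.mem_nhds hx)).differentiableAt (by norm_num)
  exact h.hasGradientAt

lemma hasFDerivAt_grad {u : EE n → ℝ} (hu : ContDiffOn ℝ 2 u (Metric.ball 0 1)) {x : EE n}
    (hx : x ∈ Metric.ball (0 : EE n) 1) :
    HasFDerivAt (gradient u) (fderiv ℝ (gradient u) x) x := by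
  have h := (hu.contDiffAt (Metric.isOpen_ball.mem_nhds hx)).fderiv_right (m := 1) (by norm_num)
  have h2 := h.differentiableAt (by norm_num)
  have h3 : DifferentiableAt ℝ (fun y => (toDual ℝ (EE n)).symm (fderiv ℝ u y)) x :=
    ((toDual ℝ (EE n)).symm.toContinuousLinearEquiv.toContinuousLinearMap.differentiableAt).comp x h2
  exact h3.hasFDerivAt

lemma hess_eq {u : EE n → ℝ} (hu : ContDiffOn ℝ 2 u (Metric.ball 0 1)) {x : EE n}
    (hx : x ∈ Metric.ball (0 : EE n) 1) (i j : Fin n) :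
    hess n u x i j = inner ℝ (fderiv ℝ (gradient u) x (EuclideanSpace.single i 1))
      (EuclideanSpace.single j (1 : ℝ)) := by
  unfold hess
  have h : (fun y => fderiv ℝ u y (EuclideanSpace.single j (1 : ℝ))) =
      fun y => inner ℝ (gradient u y) (EuclideanSpace.single j (1 : ℝ)) := by
    ext y; rw [inner_gradient_left]
  rw [h]
  have h2 := (hasFDerivAt_grad hu hx).inner ℝ
    (hasFDerivAt_const (EuclideanSpace.single j (1 : ℝ)) x)
  rw [h2.fderiv]
  simp

lemma grad_symm {u : EE n → ℝ} (hu : ContDiffOn ℝ 2 u (Metric.ball 0 1)) {x : EE n}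
    (hx : x ∈ Metric.ball (0 : EE n) 1) (e f : EE n) :
    inner ℝ (fderiv ℝ (gradient u) x e) f = inner ℝ (fderiv ℝ (gradient u) x f) e := by
  have hs : IsSymmSndFDerivAt ℝ u x :=
    (hu.contDiffAt (Metric.isOpen_ball.mem_nhds hx)).isSymmSndFDerivAt (by simp)
  have key : ∀ e f, fderiv ℝ (fderiv ℝ u) x e f = inner ℝ (fderiv ℝ (gradient u) x e) f := by
    intro e f
    have h1 : fderiv ℝ u = fun y => toDual ℝ (EE n) (gradient u y) := by
      ext y; simp
    have h2 : HasFDerivAt (fun y => toDual ℝ (EE n) (gradient u y)) 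
      (((toDual ℝ (EE n)).toContinuousLinearEquiv.toContinuousLinearMap).comp 
        (fderiv ℝ (gradient u) x)) x :=
      ((toDual ℝ (EE n)).toContinuousLinearEquiv.toContinuousLinearMap.hasFDerivAt).comp x
        (hasFDerivAt_grad hu hx)
    rw [h1, h2.fderiv]
    simp
  rw [← key, ← key]
  exact hs e f

/-- matrix of a linear map -/
noncomputable def Mat (L : EE n →L[ℝ] EE n) : Matrix (Fin n) (Fin n) ℝ :=
  Matrix.of fun i j => inner ℝ (L (EuclideanSpace.single i 1)) (EuclideanSpace.single j (1 : ℝ))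

lemma Mat_det (L : EE n →L[ℝ] EE n) : (Mat L).det = L.det := by
  have h := LinearMap.det_toMatrix (EuclideanSpace.basisFun (Fin n) ℝ).toBasis
    (L : EE n →ₗ[ℝ] EE n)
  rw [ContinuousLinearMap.det, ← h, ← Matrix.det_transpose]
  congr 1
  ext i j
  simp [Mat, LinearMap.toMatrix_apply, EuclideanSpace.inner_single_right]

lemma sum_single (x : EE n) : x = ∑ i, x i • EuclideanSpace.single i (1 : ℝ) := by
  have := (EuclideanSpace.basisFun (Fin n) ℝ).sum_repr x
  simpa using this.symm

lemma Mat_psd {L : EE n →L[ℝ] EE n} (hs : ∀ e f, inner ℝ (L e) f = inner ℝ (L f) e)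
    (hp : ∀ e, 0 ≤ inner ℝ (L e) e) : (Mat L).PosSemidef := by
  refine Matrix.PosSemidef.of_dotProduct_mulVec_nonneg ?_ ?_
  · ext i j
    simp [Mat, Matrix.conjTranspose_apply]
    have := hs (EuclideanSpace.single j 1) (EuclideanSpace.single i 1)
    simpa [EuclideanSpace.inner_single_right] using this
  · intro x
    have h := hp (WithLp.toLp 2 x)
    have h2 : inner ℝ (L (WithLp.toLp 2 x)) (WithLp.toLp 2 x) =
        star x ⬝ᵥ Matrix.mulVec (Mat L) x := by
      conv_lhs => rw [sum_single (WithLp.toLp 2 x)]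
      simp only [map_sum, map_smul, sum_inner, inner_sum, inner_smul_left, inner_smul_right]
      simp [dotProduct, Matrix.mulVec, Mat, Finset.mul_sum]
      apply Finset.sum_congr rfl; intro i _
      apply Finset.sum_congr rfl; intro j _
      rw [hs (EuclideanSpace.single j 1) (EuclideanSpace.single i 1)]
      ring
    rw [← h2]; exact h

lemma hess_eq_Mat {u : EE n → ℝ} (hu : ContDiffOn ℝ 2 u (Metric.ball 0 1)) {x : EE n}
    (hx : x ∈ Metric.ball (0 : EE n) 1) : hess n u x = Mat (fderiv ℝ (gradient u) x) := by
  ext i j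
  exact hess_eq hu hx i j

/-- second order condition at a local minimum -/
lemma second_order {w : EE n → ℝ} {F : EE n → EE n} {F' : EE n →L[ℝ] EE n} {x : EE n}
    (hmin : IsLocalMin w x) (hw : ∀ᶠ y in 𝓝 x, HasGradientAt w (F y) y)
    (hF : HasFDerivAt F F' x) (e : EE n) : 0 ≤ inner ℝ (F' e) e := by
  by_contra hneg
  push Not at hneg
  set l : ℝ → EE n := fun t => x + t • e with hl
  have hl0 : l 0 = x := by simp [hl]
  have hld : ∀ t, HasDerivAt l e t := by
    intro t
    have := ((hasDerivAt_id t).smul_const e).const_add x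
    rw [one_smul] at this
    exact this
  have hlc : ContinuousAt l 0 := (hld 0).continuousAt
  have hd : ∀ᶠ t in 𝓝 (0 : ℝ), HasDerivAt (fun t => w (l t)) (inner ℝ (F (l t)) e) t := by
    have : ∀ᶠ t in 𝓝 (0 : ℝ), HasGradientAt w (F (l t)) (l t) := by
      have h1 : Tendsto l (𝓝 0) (𝓝 x) := by
        have := hlc.tendsto; rwa [hl0] at this
      exact h1.eventually hw
    filter_upwards [this] with t ht
    have := ht.hasFDerivAt.comp_hasDerivAt t (hld t)
    rw [toDual_apply_apply] at this
    exact this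
  have hdd : HasDerivAt (fun t => inner ℝ (F (l t)) e) (inner ℝ (F' e) e) 0 := by
    have h1 : HasFDerivAt F F' (l 0) := by rw [hl0]; exact hF
    have h2 := h1.comp_hasDerivAt 0 (hld 0)
    have h3 := h2.inner ℝ (hasDerivAt_const (0 : ℝ) e)
    simpa using h3
  have hev : deriv (fun t => w (l t)) =ᶠ[𝓝 0] fun t => inner ℝ (F (l t)) e := by
    filter_upwards [hd] with t ht using ht.deriv
  have h1 : deriv (deriv (fun t => w (l t))) 0 < 0 := by
    rw [hev.deriv_eq, hdd.deriv]; exact hneg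
  have hmin' : IsLocalMin (fun t => w (l t)) 0 := by
    have h1 : Tendsto l (𝓝 0) (𝓝 x) := by
      have := hlc.tendsto; rwa [hl0] at this
    have := h1.eventually hmin
    filter_upwards [this] with t ht
    simpa [hl0] using ht
  have h2 : deriv (fun t => w (l t)) 0 = 0 := hmin'.deriv_eq_zero
  have hmax := isLocalMax_of_deriv_deriv_neg h1 h2 hd.self_of_nhds.continuousAt
  have hconst : (fun t => w (l t)) =ᶠ[𝓝 0] fun _ => w (l 0) := by
    filter_upwards [hmin', hmax] with t a b using le_antisymm b a
  have h3 : deriv (fun t => w (l t)) =ᶠ[𝓝 0] fun _ => (0 : ℝ) := by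
    have := hconst.deriv
    simpa using this
  rw [h3.deriv_eq] at h1
  simp at h1

end QSMP
namespace QSMP

open InnerProductSpace Filter Topology

variable {n : ℕ}

/-- points where `u` is touched from below in the unit ball by a paraboloid of opening `a`,
with gradient at most `G`. -/
def CS (u : EE n → ℝ) (a G : ℝ) : Set (EE n) :=
  {x | x ∈ Metric.ball (0 : EE n) 1 ∧ ‖gradient u x‖ ≤ G ∧
    ∀ z ∈ Metric.ball (0 : EE n) 1,
      u x + inner ℝ (gradient u x) (z - x) - a / 2 * ‖z - x‖ ^ 2 ≤ u z}

lemma CS_mono {u : EE n → ℝ} {a a' G G' : ℝ} (ha : a ≤ a') (hG : G ≤ G') :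
    CS u a G ⊆ CS u a' G' := by
  rintro x ⟨h1, h2, h3⟩
  refine ⟨h1, h2.trans hG, fun z hz => ?_⟩
  have := h3 z hz
  have h4 : a / 2 * ‖z - x‖ ^ 2 ≤ a' / 2 * ‖z - x‖ ^ 2 := by gcongr
  linarith

lemma CS_closed {u : EE n → ℝ} (hu : ContDiffOn ℝ 2 u (Metric.ball 0 1)) {a G : ℝ} {x : EE n}
    (hx : x ∈ Metric.ball (0 : EE n) 1) (hc : x ∈ closure (CS u a G)) : x ∈ CS u a G := by
  obtain ⟨s, hs, hlim⟩ := mem_closure_iff_seq_limit.mp hc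
  have hg : Tendsto (fun k => gradient u (s k)) atTop (𝓝 (gradient u x)) :=
    ((hasFDerivAt_grad hu hx).continuousAt.tendsto).comp hlim
  have hu' : Tendsto (fun k => u (s k)) atTop (𝓝 (u x)) :=
    ((hasGradientAt_of hu hx).continuousAt.tendsto).comp hlim
  refine ⟨hx, ?_, fun z hz => ?_⟩
  · exact le_of_tendsto hg.norm (Eventually.of_forall fun k => (hs k).2.1)
  · have h1 : Tendsto (fun k => z - s k) atTop (𝓝 (z - x)) := tendsto_const_nhds.sub hlim
    have h2 := (hu'.add (hg.inner h1)).sub ((h1.norm.pow 2).const_mul (a / 2))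
    exact le_of_tendsto h2 (Eventually.of_forall fun k => (hs k).2.2 z hz)

lemma CS_meas {u : EE n → ℝ} (hu : ContDiffOn ℝ 2 u (Metric.ball 0 1)) {a G : ℝ} :
    MeasurableSet (CS u a G) := by
  have : CS u a G = Metric.ball 0 1 ∩ closure (CS u a G) := by
    ext x
    exact ⟨fun h => ⟨h.1, subset_closure h⟩, fun h => CS_closed hu h.1 h.2⟩
  rw [this]
  exact Metric.isOpen_ball.measurableSet.inter isClosed_closure.measurableSet

/-- the barrier -/
noncomputable def psi (p Q a d : ℝ) (g x1 x0 : EE n) (x : EE n) : ℝ :=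
  inner ℝ g (x - x1) - a / 2 * ‖x - x1‖ ^ 2 - a / 2 * (‖x - x0‖ ^ 2 - d ^ 2) +
    a * d ^ 2 * (Q / p) * Real.exp (-(p / d ^ 2) * ‖x - x0‖ ^ 2)

/-- gradient of the barrier -/
noncomputable def gpsi (p Q a d : ℝ) (g x1 x0 : EE n) (x : EE n) : EE n :=
  g - a • (x - x1) - a • (x - x0) -
    (2 * a * Q * Real.exp (-(p / d ^ 2) * ‖x - x0‖ ^ 2)) • (x - x0)

/-- Hessian of the barrier -/
noncomputable def hpsi (p Q a d : ℝ) (x0 : EE n) (x : EE n) : EE n →L[ℝ] EE n :=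
  -((2 * a + 2 * a * Q * Real.exp (-(p / d ^ 2) * ‖x - x0‖ ^ 2)) • ContinuousLinearMap.id ℝ (EE n)) +
   (4 * a * Q * p / d ^ 2 * Real.exp (-(p / d ^ 2) * ‖x - x0‖ ^ 2)) •
    (innerSL ℝ (x - x0)).smulRight (x - x0)

lemma hasFDerivAt_normsq (c x : EE n) :
    HasFDerivAt (fun y => ‖y - c‖ ^ 2) (2 • innerSL ℝ (x - c)) x := by
  have h := ((hasFDerivAt_id x).sub_const c).norm_sq
  refine h.congr_fderiv ?_
  ext e
  simp

lemma hasFDerivAt_expsq (k : ℝ) (c x : EE n) :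
    HasFDerivAt (fun y => Real.exp (-k * ‖y - c‖ ^ 2))
      ((Real.exp (-k * ‖x - c‖ ^ 2) * (-k)) • (2 • innerSL ℝ (x - c))) x := by
  have h := ((hasFDerivAt_normsq c x).const_mul (-k)).exp
  refine h.congr_fderiv ?_
  rw [smul_smul]

lemma hasGradientAt_psi {p Q a d : ℝ} (hp : p ≠ 0) (hd : d ≠ 0) (g x1 x0 x : EE n) :
    HasGradientAt (psi p Q a d g x1 x0) (gpsi p Q a d g x1 x0 x) x := by
  rw [hasGradientAt_iff_hasFDerivAt]
  have h1 : HasFDerivAt (fun y => inner ℝ g (y - x1)) (innerSL ℝ g) x :=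
    (innerSL ℝ g).hasFDerivAt.comp x ((hasFDerivAt_id x).sub_const x1)
  have h := ((h1.sub ((hasFDerivAt_normsq x1 x).const_mul (a / 2))).sub
    (((hasFDerivAt_normsq x0 x).sub_const (d ^ 2)).const_mul (a / 2))).add
    ((hasFDerivAt_expsq (p / d ^ 2) x0 x).const_mul (a * d ^ 2 * (Q / p)))
  refine h.congr_fderiv ?_
  ext e
  simp [gpsi]
  field_simp
  ring

lemma hasFDerivAt_gpsi {p Q a d : ℝ} (g x1 x0 x : EE n) :
    HasFDerivAt (gpsi p Q a d g x1 x0) (hpsi p Q a d x0 x) x := by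
  have hid := hasFDerivAt_id (𝕜 := ℝ) x
  have h := ((((hid.sub_const x1).const_smul a).const_sub g).sub
    ((hid.sub_const x0).const_smul a)).sub
    (((hasFDerivAt_expsq (p / d ^ 2) x0 x).const_mul (2 * a * Q)).smul (hid.sub_const x0))
  refine h.congr_fderiv ?_
  ext1 e
  simp only [hpsi, _root_.add_apply, _root_.sub_apply,
    _root_.neg_apply, _root_.smul_apply, ContinuousLinearMap.id_apply,
    ContinuousLinearMap.smulRight_apply, innerSL_apply_apply, smul_eq_mul, nsmul_eq_mul, id]
  module

lemma psi_convex {p Q a d : ℝ} (hp : 0 < p) (hd : 0 < d) (ha : 0 ≤ a) (hQ : 0 ≤ Q)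
    (g x1 x0 x z : EE n) :
    psi p Q a d g x1 x0 x + inner ℝ (gpsi p Q a d g x1 x0 x) (z - x)
      - a * (1 + Q) * ‖z - x‖ ^ 2 ≤ psi p Q a d g x1 x0 z := by
  have h1 : ∀ c : EE n, ‖z - c‖ ^ 2 =
      ‖x - c‖ ^ 2 + 2 * inner ℝ (x - c) (z - x) + ‖z - x‖ ^ 2 := by
    intro c
    rw [← norm_add_sq_real]; congr 2; abel
  have h2 : inner ℝ g (z - x1) = inner ℝ g (x - x1) + inner ℝ g (z - x) := by
    rw [← inner_add_right]; congr 1; abel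
  set A := Real.exp (-(p / d ^ 2) * ‖x - x0‖ ^ 2) with hA
  have hA0 : 0 < A := Real.exp_pos _
  have hA1 : A ≤ 1 := by
    rw [hA, Real.exp_le_one_iff]
    have : 0 ≤ (p / d ^ 2) * ‖x - x0‖ ^ 2 := by positivity
    linarith
  set B := (p / d ^ 2) * (2 * inner ℝ (x - x0) (z - x) + ‖z - x‖ ^ 2) with hB
  have h3 : Real.exp (-(p / d ^ 2) * ‖z - x0‖ ^ 2) = A * Real.exp (-B) := by
    rw [hA, ← Real.exp_add, h1 x0, hB]; congr 1; ring
  have h4 : 1 - B ≤ Real.exp (-B) := by linarith [Real.add_one_le_exp (-B)]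
  have h5 : A * (1 - B) ≤ A * Real.exp (-B) := by gcongr
  have h6 : a * d ^ 2 * (Q / p) * (A * (1 - B)) ≤ a * d ^ 2 * (Q / p) * (A * Real.exp (-B)) :=
    mul_le_mul_of_nonneg_left h5 (by positivity)
  have h7 : a * d ^ 2 * (Q / p) * (A * (1 - B)) = a * d ^ 2 * (Q / p) * A
      - a * Q * A * (2 * inner ℝ (x - x0) (z - x) + ‖z - x‖ ^ 2) := by
    rw [hB]; field_simp
  have h8 : a * Q * A * ‖z - x‖ ^ 2 ≤ a * Q * ‖z - x‖ ^ 2 := by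
    have : a * Q * A ≤ a * Q * 1 := by gcongr
    rw [mul_one] at this
    gcongr
  have h9 : inner ℝ (gpsi p Q a d g x1 x0 x) (z - x) = inner ℝ g (z - x)
     - a * inner ℝ (x - x1) (z - x) - a * inner ℝ (x - x0) (z - x)
      - 2 * a * Q * A * inner ℝ (x - x0) (z - x) := by
    simp only [gpsi, inner_sub_left (𝕜 := ℝ) (_ - _ - _), inner_sub_left (𝕜 := ℝ) (_ - _),
      inner_sub_left g, real_inner_smul_left, hA]
  rw [h9]
  unfold psi
  rw [h3, h1 x1, h1 x0, h2, ← hA]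
  nlinarith [h6, h7, h8]

lemma gpsi_norm {p Q a d G : ℝ} (hp : 0 < p) (hd : 0 < d) (ha : 0 ≤ a) (hQ : 0 ≤ Q)
    {g x1 x0 x : EE n} (hg : ‖g‖ ≤ G) (h1 : dist x1 x0 = d) (hx : dist x x0 ≤ 3 / 2 * d) :
    ‖gpsi p Q a d g x1 x0 x‖ ≤ G + (4 + 3 * Q) * a * d := by
  set A := Real.exp (-(p / d ^ 2) * ‖x - x0‖ ^ 2) with hA
  have hA0 : 0 < A := Real.exp_pos _
  have hA1 : A ≤ 1 := by
    rw [hA, Real.exp_le_one_iff]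
    have : 0 ≤ (p / d ^ 2) * ‖x - x0‖ ^ 2 := by positivity
    linarith
  have hx' : ‖x - x0‖ ≤ 3 / 2 * d := by rwa [← dist_eq_norm]
  have hx1 : ‖x - x1‖ ≤ 5 / 2 * d := by
    rw [← dist_eq_norm]
    have := dist_triangle_right x x1 x0
    linarith
  have e1 : ‖a • (x - x1)‖ ≤ a * (5 / 2 * d) := by
    rw [norm_smul, Real.norm_of_nonneg ha]; gcongr
  have e2 : ‖a • (x - x0)‖ ≤ a * (3 / 2 * d) := by
    rw [norm_smul, Real.norm_of_nonneg ha]; gcongr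
  have e3 : ‖(2 * a * Q * A) • (x - x0)‖ ≤ 2 * a * Q * 1 * (3 / 2 * d) := by
    rw [norm_smul, Real.norm_of_nonneg (by positivity)]; gcongr
  have := norm_sub_le (g - a • (x - x1) - a • (x - x0)) ((2 * a * Q * A) • (x - x0))
  have h4 := norm_sub_le (g - a • (x - x1)) (a • (x - x0))
  have h5 := norm_sub_le g (a • (x - x1))
  unfold gpsi
  rw [← hA]
  nlinarith

end QSMP
namespace QSMP

open InnerProductSpace Filter Topology

variable {n : ℕ}

/-- contact set for tilted barriers -/
def ZS (u : EE n → ℝ) (p Q a d : ℝ) (g x1 x0 : EE n) : Set (EE n) :=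
  {x | x ∈ Metric.closedBall x0 (3 / 2 * d) ∧
    ‖gradient u x - gpsi p Q a d g x1 x0 x‖ ≤ a * (d / 4) ∧
    ∀ z ∈ Metric.ball (0 : EE n) 1,
      u x - psi p Q a d g x1 x0 x + inner ℝ (gradient u x - gpsi p Q a d g x1 x0 x) (z - x) ≤
        u z - psi p Q a d g x1 x0 z}

lemma ZS_closed {u : EE n → ℝ} (hu : ContDiffOn ℝ 2 u (Metric.ball 0 1)) {p Q a d : ℝ}
    (hp : 0 < p) (hd : 0 < d) (g x1 x0 : EE n)
    (hsub : Metric.closedBall x0 (3 / 2 * d) ⊆ Metric.ball 0 1) :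
    IsClosed (ZS u p Q a d g x1 x0) := by
  apply isClosed_of_closure_subset
  intro x hc
  obtain ⟨s, hs, hlim⟩ := mem_closure_iff_seq_limit.mp hc
  have hxc : x ∈ Metric.closedBall x0 (3 / 2 * d) :=
    Metric.isClosed_closedBall.mem_of_tendsto hlim (Eventually.of_forall fun k => (hs k).1)
  have hx := hsub hxc
  have hg : Tendsto (fun k => gradient u (s k) - gpsi p Q a d g x1 x0 (s k)) atTop
      (𝓝 (gradient u x - gpsi p Q a d g x1 x0 x)) :=
    (((hasFDerivAt_grad hu hx).continuousAt.tendsto).comp hlim).sub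
      (((hasFDerivAt_gpsi g x1 x0 x).continuousAt.tendsto).comp hlim)
  have hu' : Tendsto (fun k => u (s k) - psi p Q a d g x1 x0 (s k)) atTop
      (𝓝 (u x - psi p Q a d g x1 x0 x)) :=
    (((hasGradientAt_of hu hx).continuousAt.tendsto).comp hlim).sub
      (((hasGradientAt_psi hp.ne' hd.ne' g x1 x0 x).continuousAt.tendsto).comp hlim)
  refine ⟨hxc, ?_, fun z hz => ?_⟩
  · exact le_of_tendsto hg.norm (Eventually.of_forall fun k => (hs k).2.1)
  · have h1 : Tendsto (fun k => z - s k) atTop (𝓝 (z - x)) := tendsto_const_nhds.sub hlim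
    exact le_of_tendsto (hu'.add (hg.inner h1))
      (Eventually.of_forall fun k => (hs k).2.2 z hz)

lemma exists_contact {u : EE n → ℝ} (hu : ContDiffOn ℝ 2 u (Metric.ball 0 1)) {p Q a d G : ℝ}
    (hp : 0 < p) (hd : 0 < d) (ha : 0 < a) (hQ : 0 ≤ Q) {x1 x0 : EE n}
    (hsub : Metric.closedBall x0 (3 / 2 * d) ⊆ Metric.ball 0 1)
    (hx1 : x1 ∈ CS u a G) (h1 : dist x1 x0 = d) {v : EE n} (hv : ‖v‖ ≤ d / 4) :
    ∃ x ∈ ZS u p Q a d (gradient u x1) x1 x0,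
      gradient u x - gpsi p Q a d (gradient u x1) x1 x0 x = a • v := by
  set g := gradient u x1 with hg
  set f : EE n → ℝ := fun y => u y - psi p Q a d g x1 x0 y - inner ℝ (a • v) (y - x0) with hf
  have hfd : ∀ y ∈ Metric.ball (0 : EE n) 1, HasFDerivAt f
      (toDual ℝ (EE n) (gradient u y - gpsi p Q a d g x1 x0 y - a • v)) y := by
    intro y hy
    have e1 := (hasGradientAt_of hu hy).hasFDerivAt
    have e2 := (hasGradientAt_psi (Q := Q) (a := a) hp.ne' hd.ne' g x1 x0 y).hasFDerivAt
    have e3 : HasFDerivAt (fun y => inner ℝ (a • v) (y - x0)) (innerSL ℝ (a • v)) y :=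
      (innerSL ℝ (a • v)).hasFDerivAt.comp y ((hasFDerivAt_id y).sub_const x0)
    refine ((e1.sub e2).sub e3).congr_fderiv ?_
    ext e
    simp
  obtain ⟨x, hxc, hxmin⟩ := (isCompact_closedBall x0 (3 / 2 * d)).exists_isMinOn
    ⟨x0, Metric.mem_closedBall_self (by positivity)⟩
    (f := f) (fun y hy => (hfd y (hsub hy)).continuousAt.continuousWithinAt)
  have hx1c : x1 ∈ Metric.closedBall x0 (3 / 2 * d) := by
    rw [Metric.mem_closedBall, h1]; linarith
  have hglob : ∀ z ∈ Metric.ball (0 : EE n) 1, f x ≤ f z := by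
    intro z hz
    by_cases hzc : z ∈ Metric.closedBall x0 (3 / 2 * d)
    · exact hxmin hzc
    · refine (hxmin hx1c).trans ?_
      rw [Metric.mem_closedBall, not_le, dist_eq_norm] at hzc
      have hu1 := hx1.2.2 z hz
      rw [dist_eq_norm] at h1
      set R := ‖z - x0‖ with hR
      have hexp : Real.exp (-(p / d ^ 2) * R ^ 2) ≤ Real.exp (-(p / d ^ 2) * d ^ 2) := by
        apply Real.exp_le_exp.mpr
        have : (p / d ^ 2) * d ^ 2 ≤ (p / d ^ 2) * R ^ 2 := by gcongr; linarith
        linarith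
      have hexp2 : a * d ^ 2 * (Q / p) * Real.exp (-(p / d ^ 2) * R ^ 2) ≤
          a * d ^ 2 * (Q / p) * Real.exp (-(p / d ^ 2) * d ^ 2) := by gcongr
      have hi1 : inner ℝ v (z - x0) ≤ d / 4 * R :=
        (real_inner_le_norm _ _).trans (by rw [← hR]; gcongr)
      have hi2 : - (d / 4 * d) ≤ inner ℝ v (x1 - x0) := by
        have := (abs_le.mp (abs_real_inner_le_norm v (x1 - x0))).1
        rw [h1] at this
        have h3 : ‖v‖ * d ≤ d / 4 * d := by gcongr
        linarith
      simp only [hf, psi, ← hR, h1, real_inner_smul_left]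
      simp only [sub_self, inner_zero_right, norm_zero]
      have hq : a * (d / 4 * R) + a * (d / 4 * d) ≤ a / 2 * (R ^ 2 - d ^ 2) := by
        have : 0 ≤ a / 2 * ((R + d) * (R - 3 / 2 * d)) := by
          apply mul_nonneg (by positivity)
          apply mul_nonneg <;> linarith
        nlinarith
      have hi1' := mul_le_mul_of_nonneg_left hi1 ha.le
      have hi2' := mul_le_mul_of_nonneg_left hi2 ha.le
      linarith
  have hloc : IsLocalMin f x := by
    filter_upwards [Metric.isOpen_ball.mem_nhds (hsub hxc)] with z hz using hglob z hz
  have hz := hloc.hasFDerivAt_eq_zero (hfd x (hsub hxc))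
  have hz' : gradient u x - gpsi p Q a d g x1 x0 x = a • v := by
    have := (toDual ℝ (EE n)).map_eq_zero_iff.mp hz
    exact sub_eq_zero.mp this
  refine ⟨x, ⟨hxc, ?_, ?_⟩, hz'⟩
  · rw [hz', norm_smul, Real.norm_of_nonneg ha.le]; gcongr
  · intro z hz
    have := hglob z hz
    simp only [hf] at this
    rw [hz']
    have e : inner ℝ (a • v) (z - x) = inner ℝ (a • v) (z - x0) - inner ℝ (a • v) (x - x0) := by
      rw [← inner_sub_right]; congr 1; abel
    linarith

lemma ZS_sub_CS {u : EE n → ℝ} {p Q a d G : ℝ}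
    (hp : 0 < p) (hd : 0 < d) (ha : 0 < a) (hQ : 0 ≤ Q) {g x1 x0 : EE n}
    (hsub : Metric.closedBall x0 (3 / 2 * d) ⊆ Metric.ball 0 1)
    (hg : ‖g‖ ≤ G) (h1 : dist x1 x0 = d) :
    ZS u p Q a d g x1 x0 ⊆ CS u (2 * (1 + Q) * a) (G + (5 + 3 * Q) * a * d) := by
  rintro x ⟨hx, hx2, hx3⟩
  refine ⟨hsub hx, ?_, ?_⟩
  · have e1 := gpsi_norm hp hd ha.le hQ hg h1 hx
    have e2 := norm_add_le (gradient u x - gpsi p Q a d g x1 x0 x) (gpsi p Q a d g x1 x0 x)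
    rw [sub_add_cancel] at e2
    have : 0 < a * d := by positivity
    nlinarith
  · intro z hz
    have e1 := hx3 z hz
    have e2 := psi_convex hp hd ha.le hQ g x1 x0 x z
    rw [inner_sub_left] at e1
    nlinarith

lemma ZS_psd {u : EE n → ℝ} (hu : ContDiffOn ℝ 2 u (Metric.ball 0 1)) {p Q a d : ℝ}
    (hp : 0 < p) (hd : 0 < d) {g x1 x0 : EE n}
    (hsub : Metric.closedBall x0 (3 / 2 * d) ⊆ Metric.ball 0 1) {x : EE n}
    (hx : x ∈ ZS u p Q a d g x1 x0) :
    (Mat (fderiv ℝ (gradient u) x - hpsi p Q a d x0 x)).PosSemidef := by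
  have hxb := hsub hx.1
  apply Mat_psd
  · intro e f
    simp only [_root_.sub_apply, inner_sub_left]
    rw [grad_symm hu hxb e f]
    simp only [hpsi, _root_.add_apply, _root_.neg_apply, _root_.smul_apply,
      ContinuousLinearMap.id_apply, ContinuousLinearMap.smulRight_apply, innerSL_apply_apply,
      inner_add_left, inner_neg_left, real_inner_smul_left]
    rw [real_inner_comm e f]
    ring
  · intro e
    set c := gradient u x - gpsi p Q a d g x1 x0 x with hc
    refine second_order (w := fun z => u z - psi p Q a d g x1 x0 z - inner ℝ c (z - x))
      (F := fun y => gradient u y - gpsi p Q a d g x1 x0 y - c) (x := x) ?_ ?_ ?_ e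
    · filter_upwards [Metric.isOpen_ball.mem_nhds hxb] with z hz
      have := hx.2.2 z hz
      rw [← hc] at this
      simp only [sub_self, inner_zero_right]
      linarith
    · filter_upwards [Metric.isOpen_ball.mem_nhds hxb] with y hy
      rw [hasGradientAt_iff_hasFDerivAt]
      have e1 := (hasGradientAt_of hu hy).hasFDerivAt
      have e2 := (hasGradientAt_psi (Q := Q) (a := a) hp.ne' hd.ne' g x1 x0 y).hasFDerivAt
      have e3 : HasFDerivAt (fun y => inner ℝ c (y - x)) (innerSL ℝ c) y :=
        (innerSL ℝ c).hasFDerivAt.comp y ((hasFDerivAt_id y).sub_const x)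
      refine ((e1.sub e2).sub e3).congr_fderiv ?_
      ext e
      simp
    · exact ((hasFDerivAt_grad hu hxb).sub (hasFDerivAt_gpsi g x1 x0 x)).sub_const c

lemma Mat_hpsi (p Q a d : ℝ) (x0 x : EE n) : Mat (hpsi p Q a d x0 x) =
    -((2 * a + 2 * a * Q * Real.exp (-(p / d ^ 2) * ‖x - x0‖ ^ 2)) •
        (1 : Matrix (Fin n) (Fin n) ℝ)) +
     (4 * a * Q * p / d ^ 2 * Real.exp (-(p / d ^ 2) * ‖x - x0‖ ^ 2)) •
      Matrix.of (fun i j => (x - x0) i * (x - x0) j) := by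
  ext i j
  simp [Mat, hpsi, inner_add_left, EuclideanSpace.inner_single_right, Matrix.one_apply,
    Pi.single_apply, eq_comm, inner_smul_left]

lemma Mat_sub (L L' : EE n →L[ℝ] EE n) : Mat (L - L') = Mat L - Mat L' := by
  ext i j
  simp [Mat, inner_sub_left]

lemma Mat_smul (c : ℝ) (L : EE n →L[ℝ] EE n) : Mat (c • L) = c • Mat L := by
  ext i j
  simp [Mat, inner_smul_left]

end QSMP
namespace QSMP

open InnerProductSpace Filter Topology

variable {n : ℕ}

lemma ZS_trace {u b : EE n → ℝ} (hu : ContDiffOn ℝ 2 u (Metric.ball 0 1)) {lam Lam p Q a d G : ℝ}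
    (hlam : 0 < lam) (hLam : lam ≤ Lam)
    (hp : p = (2 * n * Lam + 1) / lam) (hQ : Q = 2 * n * Lam * Real.exp (3 * p))
    (hd : 0 < d) (ha : 0 < a) {g x1 x0 : EE n}
    (hsub : Metric.closedBall x0 (3 / 2 * d) ⊆ Metric.ball 0 1)
    (hg : ‖g‖ ≤ G) (h1 : dist x1 x0 = d) {x : EE n}
    (hb : 0 ≤ b x)
    (hP : pucciMinus n lam Lam (hess n u x) - b x * gradNorm n u x ≤ 0)
    (hx : x ∈ ZS u p Q a d g x1 x0) :
    lam * (Mat (fderiv ℝ (gradient u) x - hpsi p Q a d x0 x)).trace ≤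
      b x * (G + (5 + 3 * Q) * a * d) +
        (Metric.ball x0 d).indicator (fun _ => a * ((2 + 2 * Q) * (n * Lam))) x := by
  have hLam0 : 0 < Lam := hlam.trans_le hLam
  have hn0 : (0:ℝ) ≤ n := Nat.cast_nonneg n
  have hp0 : 0 < p := by rw [hp]; positivity
  have hQ0 : 0 ≤ Q := by rw [hQ]; positivity
  have hxb := hsub hx.1
  have hC := ZS_sub_CS hp0 hd ha hQ0 hsub hg h1 hx
  rw [Mat_sub, ← hess_eq_Mat hu hxb]
  refine trace_sub_le hLam ?_ ?_ ?_
  · rw [hess_eq_Mat hu hxb, ← Mat_sub]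
    exact ZS_psd hu hp0 hd hsub hx
  · rw [gradNorm_eq] at hP
    have := mul_le_mul_of_nonneg_left hC.2.1 hb
    linarith
  · intro A hA
    rw [Mat_hpsi]
    set E := Real.exp (-(p / d ^ 2) * ‖x - x0‖ ^ 2) with hE
    have hE0 : 0 < E := Real.exp_pos _
    have key := adm_trace_S hA (x - x0) (α := 2 * a + 2 * a * Q * E)
      (β := 4 * a * Q * p / d ^ 2 * E) (by positivity) (by positivity)
    refine le_trans ?_ key
    have hnL : 0 ≤ n * Lam := by positivity
    by_cases hxd : ‖x - x0‖ < d / 2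
    · have : x ∈ Metric.ball x0 d := by
        rw [Metric.mem_ball, dist_eq_norm]; linarith
      rw [Set.indicator_of_mem this]
      have hE1 : E ≤ 1 := by
        rw [hE, Real.exp_le_one_iff]
        have : 0 ≤ (p / d ^ 2) * ‖x - x0‖ ^ 2 := by positivity
        linarith
      have e1 : 0 ≤ 4 * a * Q * p / d ^ 2 * E * (lam * ‖x - x0‖ ^ 2) := by positivity
      have e2 : (2 * a + 2 * a * Q * E) * (n * Lam) ≤ (2 * a + 2 * a * Q * 1) * (n * Lam) := by
        gcongr
      linarith
    · have h0 : 0 ≤ (Metric.ball x0 d).indicator (fun _ => a * ((2 + 2 * Q) * (n * Lam))) x :=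
        Set.indicator_nonneg (fun _ _ => by positivity) _
      push Not at hxd
      have hx2 : ‖x - x0‖ ≤ 3 / 2 * d := by rw [← dist_eq_norm]; exact hx.1
      set s := ‖x - x0‖ ^ 2 / d ^ 2 with hs
      have hs1 : 1 / 4 ≤ s := by
        rw [hs, le_div_iff₀ (by positivity)]
        nlinarith
      have hs2 : s ≤ 3 := by
        rw [hs, div_le_iff₀ (by positivity)]
        nlinarith [norm_nonneg (x - x0)]
      have hEs : E = Real.exp (-(p * s)) := by rw [hE, hs]; congr 1; ring
      have hQE : 2 * n * Lam ≤ Q * E := by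
        have : Real.exp (-(3 * p)) ≤ E := by
          rw [hEs]; apply Real.exp_le_exp.mpr; nlinarith
        calc 2 * n * Lam = 2 * n * Lam * Real.exp (3 * p) * Real.exp (-(3 * p)) := by
              rw [mul_assoc _ (Real.exp _), ← Real.exp_add]; simp
          _ = Q * Real.exp (-(3 * p)) := by rw [hQ]
          _ ≤ Q * E := by gcongr
      have hpl : p * lam = 2 * n * Lam + 1 := by rw [hp]; field_simp
      have e1 : 4 * a * Q * p / d ^ 2 * E * (lam * ‖x - x0‖ ^ 2) =
          a * (Q * E) * (4 * (p * lam) * s) := by rw [hs]; ring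
      have e2 : a * (Q * E) * (p * lam) ≤ a * (Q * E) * (4 * (p * lam) * s) := by
        have : p * lam ≤ 4 * (p * lam) * s := by
          have : 0 < p * lam := by positivity
          nlinarith
        gcongr
      rw [e1]
      rw [hpl] at *
      nlinarith

lemma area_est (hn : n ≠ 0) {u b : EE n → ℝ} (hu : ContDiffOn ℝ 2 u (Metric.ball 0 1))
    {lam Lam p Q a d G : ℝ}
    (hlam : 0 < lam) (hLam : lam ≤ Lam)
    (hp : p = (2 * n * Lam + 1) / lam) (hQ : Q = 2 * n * Lam * Real.exp (3 * p))
    (hd : 0 < d) (ha : 0 < a) {x1 x0 : EE n}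
    (hsub : Metric.closedBall x0 (3 / 2 * d) ⊆ Metric.ball 0 1)
    (h1 : dist x1 x0 = d)
    (hb : ∀ x ∈ Metric.ball (0 : EE n) 1, 0 ≤ b x)
    (hP : ∀ x ∈ Metric.ball (0 : EE n) 1,
      pucciMinus n lam Lam (hess n u x) - b x * gradNorm n u x ≤ 0)
    (hx1 : x1 ∈ CS u a G) :
    volume (Metric.ball (0 : EE n) (d / 4)) ≤
      ENNReal.ofReal ((2 * ((2 + 2 * Q) * (n * Lam)) / lam) ^ n) *
        volume (CS u (2 * (1 + Q) * a) (G + (5 + 3 * Q) * a * d) ∩ Metric.ball x0 d) +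
      ENNReal.ofReal ((2 / lam * (G / a + (5 + 3 * Q) * d)) ^ n) *
        ∫⁻ x in Metric.closedBall x0 (3 / 2 * d), ENNReal.ofReal (b x ^ n) := by
  have hLam0 : 0 < Lam := hlam.trans_le hLam
  have hn0 : (0:ℝ) ≤ n := Nat.cast_nonneg n
  have hp0 : 0 < p := by rw [hp]; positivity
  have hQ0 : 0 ≤ Q := by rw [hQ]; positivity
  have hG0 : 0 ≤ G := (norm_nonneg _).trans hx1.2.1
  set g := gradient u x1 with hg
  set Z := ZS u p Q a d g x1 x0 with hZ
  have hZm : MeasurableSet Z := (ZS_closed hu hp0 hd g x1 x0 hsub).measurableSet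
  set T : EE n → EE n := fun x => (1 / a) • (gradient u x - gpsi p Q a d g x1 x0 x) with hT
  set T' : EE n → EE n →L[ℝ] EE n :=
    fun x => (1 / a) • (fderiv ℝ (gradient u) x - hpsi p Q a d x0 x) with hT'
  have hTd : ∀ x ∈ Z, HasFDerivWithinAt T (T' x) Z x := by
    intro x hx
    exact (((hasFDerivAt_grad hu (hsub hx.1)).sub
      (hasFDerivAt_gpsi g x1 x0 x)).const_smul (1 / a)).hasFDerivWithinAt
  have harea := MeasureTheory.addHaar_image_le_lintegral_abs_det_fderiv volume hZm hTd
  have hsubT : Metric.ball (0 : EE n) (d / 4) ⊆ T '' Z := by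
    intro v hv
    have hv' : ‖v‖ ≤ d / 4 := by
      have := Metric.mem_ball.mp hv
      rw [dist_zero_right] at this
      exact this.le
    obtain ⟨x, hx, hxe⟩ := exists_contact hu hp0 hd ha hQ0 hsub hx1 h1 hv'
    refine ⟨x, hx, ?_⟩
    simp only [hT]
    rw [hxe, smul_smul, one_div, inv_mul_cancel₀ ha.ne', one_smul]
  set C1 := (2 + 2 * Q) * (n * Lam) with hC1
  have hC10 : 0 ≤ C1 := by positivity
  set G' := G + (5 + 3 * Q) * a * d with hG'
  have hG'0 : 0 ≤ G' := by positivity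
  have hGa : 2 / lam * (G / a + (5 + 3 * Q) * d) = 2 * G' / (lam * a) := by
    rw [hG']; field_simp
  have hdet : ∀ x ∈ Z, ENNReal.ofReal |(T' x).det| ≤
      (Metric.ball x0 d).indicator (fun _ => ENNReal.ofReal ((2 * C1 / lam) ^ n)) x +
        ENNReal.ofReal ((2 / lam * (G / a + (5 + 3 * Q) * d)) ^ n) * ENNReal.ofReal (b x ^ n) := by
    intro x hx
    have hxb := hsub hx.1
    have hbx := hb x hxb
    have htr := ZS_trace hu hlam hLam hp hQ hd ha hsub hx1.2.1 h1 hbx (hP x hxb) hx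
    have hpsd := ZS_psd hu hp0 hd hsub hx
    set N := Mat (fderiv ℝ (gradient u) x - hpsi p Q a d x0 x) with hN
    have hpsd' : (Mat (T' x)).PosSemidef := by
      rw [hT', Mat_smul]
      exact hpsd.smul (by positivity)
    have h2 := det_le_trace_pow hpsd'
    rw [Mat_det] at h2
    have h3 : (Mat (T' x)).trace = N.trace / a := by
      rw [hT', Mat_smul, Matrix.trace_smul, smul_eq_mul]; ring
    set I := (Metric.ball x0 d).indicator (fun _ => a * C1) x with hI
    have hI0 : 0 ≤ I := Set.indicator_nonneg (fun _ _ => by positivity) _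
    have h4 : (Mat (T' x)).trace ≤ (b x * G' + I) / (lam * a) := by
      rw [h3, div_le_div_iff₀ ha (by positivity)]
      nlinarith
    have h5 : |(T' x).det| ≤ (2 * I / (lam * a)) ^ n + (2 * G' / (lam * a)) ^ n * b x ^ n := by
      refine h2.trans ?_
      have h6 : (Mat (T' x)).trace ^ n ≤ ((b x * G' + I) / (lam * a)) ^ n :=
        pow_le_pow_left₀ hpsd'.trace_nonneg h4 n
      refine h6.trans ?_
      rw [← mul_pow]
      have e : 2 * G' / (lam * a) * b x = 2 * (b x * G') / (lam * a) := by ring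
      rw [e]
      have hw : 0 ≤ b x * G' := by positivity
      rcases le_total I (b x * G') with hc | hc
      · have : ((b x * G' + I) / (lam * a)) ^ n ≤ (2 * (b x * G') / (lam * a)) ^ n := by
          gcongr; linarith
        have h0 : 0 ≤ (2 * I / (lam * a)) ^ n := by positivity
        linarith
      · have : ((b x * G' + I) / (lam * a)) ^ n ≤ (2 * I / (lam * a)) ^ n := by
          gcongr; linarith
        have h0 : 0 ≤ (2 * (b x * G') / (lam * a)) ^ n := by positivity
        linarith
    refine (ENNReal.ofReal_le_ofReal h5).trans ?_
    rw [ENNReal.ofReal_add (by positivity) (by positivity), ENNReal.ofReal_mul (by positivity), hGa]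
    gcongr
    by_cases hxi : x ∈ Metric.ball x0 d
    · rw [Set.indicator_of_mem hxi, hI, Set.indicator_of_mem hxi]
      apply ENNReal.ofReal_le_ofReal
      apply le_of_eq
      congr 1
      field_simp
    · rw [hI, Set.indicator_of_notMem hxi]
      simp [hn]
  calc volume (Metric.ball (0 : EE n) (d / 4)) ≤ volume (T '' Z) := measure_mono hsubT
    _ ≤ ∫⁻ x in Z, ENNReal.ofReal |(T' x).det| := harea
    _ ≤ ∫⁻ x in Z, ((Metric.ball x0 d).indicator (fun _ => ENNReal.ofReal ((2 * C1 / lam) ^ n)) x +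
        ENNReal.ofReal ((2 / lam * (G / a + (5 + 3 * Q) * d)) ^ n) * ENNReal.ofReal (b x ^ n)) :=
        setLIntegral_mono' hZm hdet
    _ = ENNReal.ofReal ((2 * C1 / lam) ^ n) * volume (Metric.ball x0 d ∩ Z) +
        ENNReal.ofReal ((2 / lam * (G / a + (5 + 3 * Q) * d)) ^ n) *
          ∫⁻ x in Z, ENNReal.ofReal (b x ^ n) := by
        rw [lintegral_add_left (measurable_const.indicator measurableSet_ball),
          lintegral_const_mul' _ _ ENNReal.ofReal_ne_top,
          lintegral_indicator measurableSet_ball, setLIntegral_const,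
          Measure.restrict_apply measurableSet_ball]
    _ ≤ _ := by
        rw [Set.inter_comm]
        refine add_le_add (mul_le_mul_right (measure_mono ?_) _)
          (mul_le_mul_right (lintegral_mono_set fun x hx => hx.1) _)
        exact Set.inter_subset_inter_left _ (ZS_sub_CS hp0 hd ha hQ0 hsub hx1.2.1 h1)

end QSMP
namespace QSMP

open InnerProductSpace Filter Topology

variable {n : ℕ}

/-- the hypotheses on `b` and `u` -/
structure Hyp (n : ℕ) (lam Lam q K : ℝ) (b u : EE n → ℝ) : Prop where
  bc : ContinuousOn b (Metric.ball 0 1)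
  b0 : ∀ x ∈ Metric.ball (0 : EE n) 1, 0 ≤ b x
  bL : LpNormE n q b (Metric.ball 0 1) ≤ ENNReal.ofReal K
  hu : ContDiffOn ℝ 2 u (Metric.ball 0 1)
  u0 : ∀ x ∈ Metric.ball (0 : EE n) 1, 0 ≤ u x
  hP : ∀ x ∈ Metric.ball (0 : EE n) 1,
      pucciMinus n lam Lam (hess n u x) - b x * gradNorm n u x ≤ 0

/-- volume of the unit ball -/
noncomputable def vB (n : ℕ) : ℝ := (volume (Metric.ball (0 : EE n) 1)).toReal

lemma vB_pos : 0 < vB n :=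
  ENNReal.toReal_pos (Metric.measure_ball_pos volume _ one_pos).ne' measure_ball_lt_top.ne

lemma vol_unit : volume (Metric.ball (0 : EE n) 1) = ENNReal.ofReal (vB n) :=
  (ENNReal.ofReal_toReal measure_ball_lt_top.ne).symm

lemma vol_ball (hn : n ≠ 0) (x : EE n) {r : ℝ} (hr : 0 ≤ r) :
    volume (Metric.ball x r) = ENNReal.ofReal (r ^ n * vB n) := by
  have : Nonempty (Fin n) := ⟨⟨0, Nat.pos_of_ne_zero hn⟩⟩
  rw [Measure.addHaar_ball _ _ hr, vol_unit, ENNReal.ofReal_mul (by positivity)]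
  simp

lemma vol_closedBall (hn : n ≠ 0) (x : EE n) {r : ℝ} (hr : 0 ≤ r) :
    volume (Metric.closedBall x r) = ENNReal.ofReal (r ^ n * vB n) := by
  have : Nonempty (Fin n) := ⟨⟨0, Nat.pos_of_ne_zero hn⟩⟩
  rw [Measure.addHaar_closedBall _ _ hr, vol_unit, ENNReal.ofReal_mul (by positivity)]
  simp

lemma Hyp.int_bq {lam Lam q K : ℝ} {b u : EE n → ℝ} (h : Hyp n lam Lam q K b u) (hq : 0 < q)
    (hK : 0 < K) :
    ∫⁻ x in Metric.ball (0 : EE n) 1, ENNReal.ofReal (b x ^ q) ≤ ENNReal.ofReal (K ^ q) := by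
  have h1 := h.bL
  unfold LpNormE at h1
  have h2 : ∫⁻ x in Metric.ball (0 : EE n) 1, ENNReal.ofReal (b x ^ q) =
      ∫⁻ x in Metric.ball (0 : EE n) 1, ENNReal.ofReal (|b x| ^ q) := by
    apply setLIntegral_congr_fun measurableSet_ball
    intro x hx
    simp only [abs_of_nonneg (h.b0 x hx)]
  rw [h2, ← ENNReal.ofReal_rpow_of_pos hK]
  rw [one_div] at h1
  exact (ENNReal.rpow_inv_le_iff hq).mp h1

lemma young_pow {t s q : ℝ} (ht : 0 ≤ t) (hs : 0 < s) (hq : (n : ℝ) < q) :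
    t ^ n ≤ s ^ n + s ^ ((n : ℝ) - q) * t ^ q := by
  rcases le_or_gt t s with h | h
  · have : t ^ n ≤ s ^ n := by gcongr
    have : 0 ≤ s ^ ((n : ℝ) - q) * t ^ q := by positivity
    linarith
  · have ht0 : 0 < t := hs.trans h
    have e : t ^ n = t ^ ((n : ℝ) - q) * t ^ q := by
      rw [← Real.rpow_add ht0, sub_add_cancel, Real.rpow_natCast]
    have e2 : t ^ ((n : ℝ) - q) ≤ s ^ ((n : ℝ) - q) :=
      Real.rpow_le_rpow_of_nonpos hs h.le (by linarith)
    have : t ^ ((n : ℝ) - q) * t ^ q ≤ s ^ ((n : ℝ) - q) * t ^ q := by gcongr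
    have : 0 ≤ s ^ n := by positivity
    linarith

lemma Hyp.int_bn {lam Lam q K : ℝ} {b u : EE n → ℝ} (h : Hyp n lam Lam q K b u)
    (hq : (n : ℝ) < q) (hK : 0 < K) {s : ℝ} (hs : 0 < s) {E : Set (EE n)} (hE : MeasurableSet E)
    (hEB : E ⊆ Metric.ball 0 1) :
    ∫⁻ x in E, ENNReal.ofReal (b x ^ n) ≤
      ENNReal.ofReal (s ^ n) * volume E + ENNReal.ofReal (s ^ ((n : ℝ) - q) * K ^ q) := by
  have hq0 : 0 < q := lt_of_le_of_lt (Nat.cast_nonneg n) hq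
  calc ∫⁻ x in E, ENNReal.ofReal (b x ^ n)
      ≤ ∫⁻ x in E, (ENNReal.ofReal (s ^ n) +
          ENNReal.ofReal (s ^ ((n : ℝ) - q)) * ENNReal.ofReal (b x ^ q)) := by
        apply setLIntegral_mono' hE
        intro x hx
        have hb := h.b0 x (hEB hx)
        rw [← ENNReal.ofReal_mul (by positivity), ← ENNReal.ofReal_add (by positivity)
          (by positivity)]
        exact ENNReal.ofReal_le_ofReal (young_pow hb hs hq)
    _ = ENNReal.ofReal (s ^ n) * volume E +
          ENNReal.ofReal (s ^ ((n : ℝ) - q)) * ∫⁻ x in E, ENNReal.ofReal (b x ^ q) := by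
        rw [lintegral_add_left measurable_const, lintegral_const_mul' _ _ ENNReal.ofReal_ne_top,
          setLIntegral_const]
    _ ≤ _ := by
        rw [ENNReal.ofReal_mul (by positivity)]
        gcongr
        exact (lintegral_mono_set hEB).trans (h.int_bq hq0 hK)

lemma density (hn : n ≠ 0) {lam Lam q K : ℝ} (hlam : 0 < lam) (hLam : lam ≤ Lam)
    (hq : (n : ℝ) < q) (hK : 0 < K) :
    ∃ M0 C2 c1 C3 d0 CK : ℝ, 0 < M0 ∧ 0 < C2 ∧ 0 < c1 ∧ 0 < C3 ∧ 0 < d0 ∧ 0 < CK ∧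
      ∀ b u : EE n → ℝ, Hyp n lam Lam q K b u →
        (∫⁻ x in Metric.ball (0 : EE n) 1, ENNReal.ofReal (b x ^ n) ≤ ENNReal.ofReal CK) ∧
        ∀ (a G d : ℝ) (x1 x0 : EE n), 0 < a → 0 < d → d ≤ d0 → dist x1 x0 = d →
          Metric.closedBall x0 (3 / 2 * d) ⊆ Metric.ball 0 1 → x1 ∈ CS u a G →
          ENNReal.ofReal (c1 * d ^ n) ≤
            volume (CS u (M0 * a) (G + C2 * a * d) ∩ Metric.ball x0 d) +
            ENNReal.ofReal (C3 * (G / a) ^ n) *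
              ∫⁻ x in Metric.closedBall x0 (3 / 2 * d), ENNReal.ofReal (b x ^ n) := by
  have hLam0 : 0 < Lam := hlam.trans_le hLam
  have hn0 : (0:ℝ) < n := Nat.cast_pos.mpr (Nat.pos_of_ne_zero hn)
  obtain ⟨p, hp⟩ : ∃ p, p = (2 * n * Lam + 1) / lam := ⟨_, rfl⟩
  obtain ⟨Q, hQ⟩ : ∃ Q, Q = 2 * n * Lam * Real.exp (3 * p) := ⟨_, rfl⟩
  have hQ0 : 0 < Q := by rw [hQ]; positivity
  have hv := vB_pos (n := n)
  set v := vB n with hvd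
  set C2 := 5 + 3 * Q with hC2
  have hC20 : 0 < C2 := by positivity
  set A := (2 * ((2 + 2 * Q) * (n * Lam)) / lam) ^ n with hA
  have hA0 : 0 < A := by positivity
  set η := v / (2 * (16 * C2 / lam) ^ n) with hη
  have hη0 : 0 < η := by positivity
  -- choice of `s`
  obtain ⟨s, hs0, hs⟩ : ∃ s : ℝ, 0 < s ∧ s ^ ((n : ℝ) - q) * K ^ q ≤ η / 2 := by
    have : Tendsto (fun s : ℝ => s ^ (-(q - n)) * K ^ q) atTop (𝓝 (0 * K ^ q)) :=
      (tendsto_rpow_neg_atTop (by linarith)).mul_const _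
    rw [zero_mul] at this
    obtain ⟨s, h1, h2⟩ := ((this.eventually (gt_mem_nhds (half_pos hη0))).and
      (eventually_gt_atTop 0)).exists
    exact ⟨s, h2, by rw [neg_sub] at h1; exact h1.le⟩
  obtain ⟨d0, hd00, hd0⟩ : ∃ d0 : ℝ, 0 < d0 ∧ s ^ n * ((3 / 2 * d0) ^ n * v) ≤ η / 2 := by
    have : Tendsto (fun d : ℝ => s ^ n * ((3 / 2 * d) ^ n * v)) (𝓝[>] 0)
        (𝓝 (s ^ n * ((3 / 2 * 0) ^ n * v))) := by
      apply Tendsto.mono_left _ nhdsWithin_le_nhds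
      exact Continuous.tendsto (by fun_prop) 0
    simp only [mul_zero, ne_eq, hn, not_false_eq_true, zero_pow, zero_mul] at this
    obtain ⟨d, h1, h2⟩ := ((this.eventually (gt_mem_nhds (half_pos hη0))).and
      self_mem_nhdsWithin).exists
    exact ⟨d, h2, h1.le⟩
  refine ⟨2 * (1 + Q), C2, (1 / 4) ^ n * v / (2 * A), (4 / lam) ^ n / A, d0,
    v + K ^ q, by positivity, by positivity, by positivity, by positivity, hd00, by positivity,
    fun b u h => ⟨?_, ?_⟩⟩
  · have := h.int_bn hq hK one_pos measurableSet_ball subset_rfl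
    rw [vol_unit] at this
    refine this.trans ?_
    rw [ENNReal.ofReal_add hv.le (by positivity)]
    simp [hvd]
  intro a G d x1 x0 ha hd hdd hx10 hsub hx1
  have hG0 : 0 ≤ G := (norm_nonneg _).trans hx1.2.1
  have hGa : 0 ≤ G / a := by positivity
  have h1 := area_est hn h.hu hlam hLam hp hQ hd ha hsub hx10 h.b0 h.hP hx1
  set I := ∫⁻ x in Metric.closedBall x0 (3 / 2 * d), ENNReal.ofReal (b x ^ n) with hI
  set X := volume (CS u (2 * (1 + Q) * a) (G + C2 * a * d) ∩ Metric.ball x0 d) with hX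
  have hIη : I ≤ ENNReal.ofReal η := by
    have h2 := h.int_bn hq hK hs0 Metric.isClosed_closedBall.measurableSet hsub
    rw [vol_closedBall hn x0 (by positivity), ← ENNReal.ofReal_mul (by positivity),
      ← ENNReal.ofReal_add (by positivity) (by positivity)] at h2
    refine h2.trans (ENNReal.ofReal_le_ofReal ?_)
    have : s ^ n * ((3 / 2 * d) ^ n * vB n) ≤ s ^ n * ((3 / 2 * d0) ^ n * v) := by gcongr
    linarith
  rw [vol_ball hn _ (by positivity), ← hvd] at h1
  have h3 : (2 / lam * (G / a + C2 * d)) ^ n ≤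
      (4 / lam) ^ n * (G / a) ^ n + (4 / lam) ^ n * (C2 * d) ^ n := by
    rw [← mul_pow, ← mul_pow]
    rcases le_total (G / a) (C2 * d) with hc | hc
    · have : (2 / lam * (G / a + C2 * d)) ^ n ≤ (4 / lam * (C2 * d)) ^ n := by
        apply pow_le_pow_left₀ (by positivity)
        have : 2 / lam * (G / a + C2 * d) ≤ 2 / lam * (C2 * d + C2 * d) := by gcongr
        linarith [this, (by ring : 2 / lam * (C2 * d + C2 * d) = 4 / lam * (C2 * d))]
      have h0 : 0 ≤ (4 / lam * (G / a)) ^ n := by positivity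
      linarith
    · have : (2 / lam * (G / a + C2 * d)) ^ n ≤ (4 / lam * (G / a)) ^ n := by
        apply pow_le_pow_left₀ (by positivity)
        have : 2 / lam * (G / a + C2 * d) ≤ 2 / lam * (G / a + G / a) := by gcongr
        linarith [this, (by ring : 2 / lam * (G / a + G / a) = 4 / lam * (G / a))]
      have h0 : 0 ≤ (4 / lam * (C2 * d)) ^ n := by positivity
      linarith
  set m := (1 / 4) ^ n * v * d ^ n with hm
  have hm0 : 0 < m := by positivity
  have h4 : (d / 4) ^ n * v = m / 2 + m / 2 := by
    rw [hm, div_eq_mul_one_div, mul_pow]; ring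
  have h5 : ENNReal.ofReal ((4 / lam) ^ n * (C2 * d) ^ n) * I ≤ ENNReal.ofReal (m / 2) := by
    calc _ ≤ ENNReal.ofReal ((4 / lam) ^ n * (C2 * d) ^ n) * ENNReal.ofReal η := by gcongr
      _ = ENNReal.ofReal ((4 / lam) ^ n * (C2 * d) ^ n * η) := by
        rw [← ENNReal.ofReal_mul (by positivity)]
      _ = _ := by
        congr 1
        rw [hη, hm]
        have : (16 * C2 / lam) ^ n = 4 ^ n * ((4 / lam) ^ n * C2 ^ n) := by
          rw [← mul_pow, ← mul_pow]; congr 1; ring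
        rw [this, mul_pow C2 d, div_pow 1 4, one_pow]
        have : 0 < (4 / lam) ^ n := by positivity
        field_simp
  have h6 : ENNReal.ofReal (m / 2) ≤ ENNReal.ofReal A * X +
      ENNReal.ofReal ((4 / lam) ^ n * (G / a) ^ n) * I := by
    have h7 : ENNReal.ofReal (m / 2) + ENNReal.ofReal (m / 2) ≤ (ENNReal.ofReal A * X +
      ENNReal.ofReal ((4 / lam) ^ n * (G / a) ^ n) * I) + ENNReal.ofReal (m / 2) := by
      rw [← ENNReal.ofReal_add (by positivity) (by positivity), ← h4]
      refine h1.trans ?_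
      rw [add_assoc]
      refine add_le_add le_rfl ?_
      refine le_trans ?_ (add_le_add le_rfl h5)
      rw [← add_mul, ← ENNReal.ofReal_add (by positivity) (by positivity)]
      gcongr
    exact (ENNReal.add_le_add_iff_right ENNReal.ofReal_ne_top).mp h7
  have h8 := mul_le_mul_right h6 (ENNReal.ofReal (1 / A))
  rw [mul_add, ← mul_assoc, ← mul_assoc, ← ENNReal.ofReal_mul (by positivity),
    ← ENNReal.ofReal_mul (by positivity), ← ENNReal.ofReal_mul (by positivity),
    one_div_mul_cancel hA0.ne', ENNReal.ofReal_one, one_mul] at h8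
  convert h8 using 2
  · rw [hm]; field_simp
  · congr 2; field_simp

end QSMP
namespace QSMP

open InnerProductSpace Filter Topology

variable {n : ℕ}

/-- geometric selection of a ball in the complement of the contact set, touching it. -/
lemma geom {u : EE n → ℝ} (hu : ContDiffOn ℝ 2 u (Metric.ball 0 1)) {a G R σ : ℝ}
    (hσ : 0 < σ) (hσR : 3 / 2 * σ ≤ 1 - R) {xs : EE n} (hxs : xs ∈ CS u a G) (hxR : ‖xs‖ ≤ R)
    {x : EE n} (hx : x ∈ Metric.ball (0 : EE n) 1 \ CS u a G) :
    ∃ (y x1 : EE n) (d : ℝ), 0 < d ∧ d ≤ σ ∧ dist x y ≤ 2 / σ * d ∧ dist x1 y = d ∧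
      x1 ∈ CS u a G ∧ Metric.closedBall y (3 / 2 * d) ⊆ Metric.ball 0 1 ∧
      Metric.ball y d ⊆ Metric.ball 0 1 \ CS u a G := by
  set y : ℝ → EE n := fun t => x + t • (xs - x) with hy
  set φ : ℝ → ℝ := fun t => Metric.infDist (y t) (CS u a G) - σ * t with hφ
  have hyc : Continuous y := by fun_prop
  have hφc : Continuous φ := by
    have := (Metric.continuous_infDist_pt (CS u a G)).comp hyc
    exact this.sub (by fun_prop)
  have hne : (CS u a G).Nonempty := ⟨xs, hxs⟩
  have h0 : 0 < φ 0 := by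
    simp only [hφ, hy, zero_smul, add_zero, mul_zero, sub_zero]
    rcases (Metric.infDist_nonneg (x := x) (s := CS u a G)).lt_or_eq with h | h
    · exact h
    · exfalso
      exact hx.2 (CS_closed hu hx.1 ((Metric.mem_closure_iff_infDist_zero hne).mpr h.symm))
  have h1 : φ 1 < 0 := by
    simp only [hφ, hy, one_smul, add_sub_cancel, mul_one]
    rw [Metric.infDist_zero_of_mem hxs]
    linarith
  obtain ⟨t, ht, hφt⟩ : (0 : ℝ) ∈ φ '' Set.Icc 0 1 :=
    intermediate_value_Icc' zero_le_one hφc.continuousOn ⟨h1.le, h0.le⟩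
  have ht0 : 0 < t := by
    rcases ht.1.lt_or_eq with h | h
    · exact h
    · rw [← h] at hφt; linarith
  have ht1 : t < 1 := by
    rcases ht.2.lt_or_eq with h | h
    · exact h
    · rw [h] at hφt; linarith
  have hinf : Metric.infDist (y t) (CS u a G) = σ * t := by
    have : Metric.infDist (y t) (CS u a G) - σ * t = 0 := hφt
    linarith
  have hxn : ‖x‖ < 1 := by have := hx.1; rwa [mem_ball_zero_iff] at this
  have hyn : ‖y t‖ ≤ (1 - t) * ‖x‖ + t * R := by
    have : y t = (1 - t) • x + t • xs := by simp only [hy]; module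
    rw [this]
    refine (norm_add_le _ _).trans ?_
    rw [norm_smul, norm_smul, Real.norm_of_nonneg (by linarith), Real.norm_of_nonneg ht0.le]
    gcongr
  have hsub : Metric.closedBall (y t) (3 / 2 * (σ * t)) ⊆ Metric.ball 0 1 := by
    intro z hz
    rw [Metric.mem_closedBall, dist_eq_norm] at hz
    rw [mem_ball_zero_iff]
    have h3 := norm_add_le (z - y t) (y t)
    rw [sub_add_cancel] at h3
    nlinarith
  have hd : 0 < σ * t := by positivity
  obtain ⟨x1, hx1, hx1d⟩ := isClosed_closure.exists_infDist_eq_dist hne.closure (y t)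
  rw [Metric.infDist_closure, hinf] at hx1d
  have hx1d' : dist x1 (y t) = σ * t := by rw [dist_comm]; exact hx1d.symm
  refine ⟨y t, x1, σ * t, hd, by nlinarith, ?_, hx1d', ?_, hsub, ?_⟩
  · rw [dist_comm, dist_eq_norm]
    simp only [hy, add_sub_cancel_left]
    rw [norm_smul, Real.norm_of_nonneg ht0.le]
    have h4 := norm_sub_le xs x
    have h5 : 2 / σ * (σ * t) = 2 * t := by field_simp
    rw [h5]
    have : ‖xs - x‖ ≤ 2 := by linarith
    nlinarith
  · apply CS_closed hu _ hx1
    apply hsub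
    rw [Metric.mem_closedBall, hx1d']
    linarith
  · intro z hz
    refine ⟨hsub (Metric.ball_subset_closedBall (Metric.ball_subset_ball (by linarith) hz)), ?_⟩
    intro hzC
    have h6 := Metric.infDist_le_dist_of_mem (x := y t) hzC
    rw [hinf, dist_comm] at h6
    exact absurd hz (by rw [Metric.mem_ball]; linarith)

/-- measure of the complement of the contact set -/
noncomputable def mD (u : EE n → ℝ) (a G : ℝ) : ℝ :=
  (volume (Metric.ball (0 : EE n) 1 \ CS u a G)).toReal

lemma vol_D_ne_top (u : EE n → ℝ) (a G : ℝ) :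
    volume (Metric.ball (0 : EE n) 1 \ CS u a G) ≠ ⊤ :=
  ((measure_mono Set.sdiff_subset).trans_lt measure_ball_lt_top).ne

lemma mD_le (u : EE n → ℝ) (a G : ℝ) : mD u a G ≤ vB n :=
  ENNReal.toReal_mono measure_ball_lt_top.ne (measure_mono Set.sdiff_subset)

lemma step (hn : n ≠ 0) {lam Lam q K R : ℝ} (hlam : 0 < lam) (hLam : lam ≤ Lam)
    (hq : (n : ℝ) < q) (hK : 0 < K) (hR : R < 1) :
    ∃ M0 C2 c C : ℝ, 1 ≤ M0 ∧ 0 < C2 ∧ 0 < c ∧ c ≤ 1 ∧ 0 < C ∧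
      ∀ b u : EE n → ℝ, Hyp n lam Lam q K b u → ∀ a G M G' : ℝ, 0 < a → M0 ≤ M → G ≤ G' →
        (∃ x ∈ CS u a G, ‖x‖ ≤ R) →
        (∀ d : ℝ, 0 < d → d ^ n * vB n ≤ mD u a G → G + C2 * a * d ≤ G') →
        mD u (M * a) G' ≤ (1 - c) * mD u a G + C * (G / a) ^ n := by
  obtain ⟨M0, C2, c1, C3, d0, CK, hM0, hC2, hc1, hC3, hd0, hCK, H⟩ :=
    density hn hlam hLam hq hK
  have hv := vB_pos (n := n)
  set σ := min d0 (2 / 3 * (1 - R)) with hσd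
  have hσ : 0 < σ := lt_min hd0 (by linarith)
  have hσR : 3 / 2 * σ ≤ 1 - R := by
    have := min_le_right d0 (2 / 3 * (1 - R))
    linarith
  have hσ0 : σ ≤ d0 := min_le_left _ _
  set L := 2 / σ + 2 with hL
  have hL0 : 0 < L := by positivity
  set C4 := (5 * L) ^ n * vB n / c1 with hC4
  have hC40 : 0 < C4 := by positivity
  refine ⟨max M0 1, C2, 1 / (C4 + 1), C4 * C3 * CK / (C4 + 1), le_max_right _ _, hC2,
    by positivity, ?_, by positivity, ?_⟩
  · rw [div_le_one (by positivity)]; linarith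
  intro b u h a G M G' ha hM hGG' ⟨xs, hxs, hxR⟩ hd'
  obtain ⟨Hb, Hd⟩ := H b u h
  have hG0 : 0 ≤ G := (norm_nonneg _).trans hxs.2.1
  have hM1 : 1 ≤ M := (le_max_right _ _).trans hM
  have hMM : M0 ≤ M := (le_max_left _ _).trans hM
  set D := Metric.ball (0 : EE n) 1 \ CS u a G with hD
  set S := CS u (M * a) G' with hS
  have hDtop : volume D ≠ ⊤ := vol_D_ne_top u a G
  have hg := fun x (hx : x ∈ D) => geom h.hu hσ hσR hxs hxR hx
  choose! y x1 d hd1 hd2 hd3 hd4 hd5 hd6 hd7 using hg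
  obtain ⟨I, hID, hIdisj, hIcov⟩ := Vitali.exists_disjoint_subfamily_covering_enlargement_closedBall
    D y (fun x => L * d x) (L * σ) (fun x hx => by have := hd2 x hx; gcongr) 5 (by norm_num)
  have hL32 : 3 / 2 ≤ L := by
    have : 0 < 2 / σ := by positivity
    linarith
  have hIdisj2 : I.PairwiseDisjoint (fun x => Metric.closedBall (y x) (3 / 2 * d x)) := by
    intro p hp p' hp' hne
    have := hIdisj hp hp' hne
    refine this.mono ?_ ?_
    · have := hd1 p (hID hp)
      exact Metric.closedBall_subset_closedBall (by gcongr)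
    · have := hd1 p' (hID hp')
      exact Metric.closedBall_subset_closedBall (by gcongr)
  have hIdisj3 : I.PairwiseDisjoint (fun x => S ∩ Metric.ball (y x) (d x)) := by
    intro p hp p' hp' hne
    refine (hIdisj2 hp hp' hne).mono ?_ ?_
    · have := hd1 p (hID hp)
      exact Set.inter_subset_right.trans
        ((Metric.ball_subset_ball (by linarith)).trans Metric.ball_subset_closedBall)
    · have := hd1 p' (hID hp')
      exact Set.inter_subset_right.trans
        ((Metric.ball_subset_ball (by linarith)).trans Metric.ball_subset_closedBall)
  have hIc : I.Countable := by
    refine hIdisj2.countable_of_nonempty_interior ?_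
    intro p hp
    have := hd1 p (hID hp)
    exact ⟨y p, Metric.ball_subset_interior_closedBall (Metric.mem_ball_self (by positivity))⟩
  have hcov : D ⊆ ⋃ x ∈ I, Metric.closedBall (y x) (5 * (L * d x)) := by
    intro x hx
    obtain ⟨p, hp, hpc⟩ := hIcov x hx
    refine Set.mem_biUnion hp (hpc ?_)
    rw [Metric.mem_closedBall]
    have e1 := hd3 x hx
    have e2 := hd1 x hx
    have : 2 / σ * d x ≤ L * d x := by rw [hL]; gcongr; linarith
    linarith
  have hone : ∀ p ∈ I, volume (Metric.closedBall (y p) (5 * (L * d p))) ≤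
      ENNReal.ofReal C4 * (volume (S ∩ Metric.ball (y p) (d p)) +
        ENNReal.ofReal (C3 * (G / a) ^ n) *
          ∫⁻ x in Metric.closedBall (y p) (3 / 2 * d p), ENNReal.ofReal (b x ^ n)) := by
    intro p hp
    have hpD := hID hp
    have e1 := hd1 p hpD
    have e2 := Hd a G (d p) (x1 p) (y p) ha e1 ((hd2 p hpD).trans hσ0) (hd4 p hpD) (hd6 p hpD)
      (hd5 p hpD)
    have e3 : d p ^ n * vB n ≤ mD u a G := by
      have := ENNReal.toReal_mono hDtop (measure_mono (hd7 p hpD) (μ := volume))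
      rw [vol_ball hn _ e1.le, ENNReal.toReal_ofReal (by positivity)] at this
      exact this
    rw [vol_closedBall hn _ (by positivity)]
    have e4 : (5 * (L * d p)) ^ n * vB n = C4 * (c1 * d p ^ n) := by
      rw [hC4, ← mul_assoc, mul_pow]; field_simp
    rw [e4, ENNReal.ofReal_mul hC40.le]
    refine mul_le_mul_right (e2.trans ?_) _
    refine add_le_add (measure_mono ?_) le_rfl
    exact Set.inter_subset_inter_left _ (CS_mono (by gcongr) (hd' _ e1 e3))
  have hSm : MeasurableSet S := CS_meas h.hu
  have hmain : volume D ≤ ENNReal.ofReal C4 * (volume (D ∩ S) +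
      ENNReal.ofReal (C3 * (G / a) ^ n) * ENNReal.ofReal CK) := by
    calc volume D ≤ volume (⋃ x ∈ I, Metric.closedBall (y x) (5 * (L * d x))) := measure_mono hcov
      _ ≤ ∑' p : I, volume (Metric.closedBall (y p) (5 * (L * d p))) := measure_biUnion_le _ hIc _
      _ ≤ ∑' p : I, ENNReal.ofReal C4 * (volume (S ∩ Metric.ball (y p) (d p)) +
        ENNReal.ofReal (C3 * (G / a) ^ n) *
          ∫⁻ x in Metric.closedBall (y p) (3 / 2 * d p), ENNReal.ofReal (b x ^ n)) :=
          ENNReal.tsum_le_tsum fun p => hone p p.2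
      _ = ENNReal.ofReal C4 * (∑' p : I, volume (S ∩ Metric.ball (y p) (d p)) +
        ENNReal.ofReal (C3 * (G / a) ^ n) *
          ∑' p : I, ∫⁻ x in Metric.closedBall (y p) (3 / 2 * d p), ENNReal.ofReal (b x ^ n)) := by
          rw [ENNReal.tsum_mul_left, ENNReal.tsum_add, ENNReal.tsum_mul_left]
      _ ≤ _ := by
          refine mul_le_mul_right (add_le_add ?_ (mul_le_mul_right ?_ _)) _
          · rw [← measure_biUnion hIc hIdisj3 (fun p _ => hSm.inter measurableSet_ball)]
            apply measure_mono
            apply Set.iUnion₂_subset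
            intro p hp z hz
            exact ⟨hd7 p (hID hp) hz.2, hz.1⟩
          · rw [← lintegral_biUnion hIc
              (fun p _ => Metric.isClosed_closedBall.measurableSet) hIdisj2]
            refine (lintegral_mono_set ?_).trans Hb
            exact Set.iUnion₂_subset fun p hp => hd6 p (hID hp)
  have hsplit : mD u a G = (volume (D ∩ S)).toReal + mD u (M * a) G' := by
    have e1 := measure_inter_add_sdiff (μ := volume) D hSm
    have e2 : D \ S = Metric.ball (0 : EE n) 1 \ S := by
      ext z
      constructor
      · exact fun hz => ⟨hz.1.1, hz.2⟩
      · exact fun hz => ⟨⟨hz.1, fun hc => hz.2 (CS_mono (by nlinarith) hGG' hc)⟩, hz.2⟩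
    unfold mD
    rw [← hD, ← e1, e2, ENNReal.toReal_add]
    · exact ((measure_mono Set.inter_subset_left).trans_lt hDtop.lt_top).ne
    · exact vol_D_ne_top _ _ _
  have hDS : volume (D ∩ S) ≠ ⊤ :=
    ((measure_mono Set.inter_subset_left).trans_lt hDtop.lt_top).ne
  have hreal : mD u a G ≤ C4 * ((volume (D ∩ S)).toReal + C3 * (G / a) ^ n * CK) := by
    have e := ENNReal.toReal_mono (by finiteness) hmain
    rw [ENNReal.toReal_mul, ENNReal.toReal_add hDS (by finiteness), ENNReal.toReal_mul,
      ENNReal.toReal_ofReal hC40.le, ENNReal.toReal_ofReal (by positivity),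
      ENNReal.toReal_ofReal hCK.le] at e
    exact e
  set m := mD u a G
  set m' := mD u (M * a) G'
  set w := (volume (D ∩ S)).toReal
  have hw : 0 ≤ w := ENNReal.toReal_nonneg
  have e : (1 - 1 / (C4 + 1)) * m + C4 * C3 * CK / (C4 + 1) * (G / a) ^ n
    = (C4 * m + C4 * C3 * CK * (G / a) ^ n) / (C4 + 1) := by field_simp; ring
  rw [e, le_div_iff₀ (by positivity)]
  nlinarith

end QSMP
namespace QSMP

open InnerProductSpace Filter Topology

variable {n : ℕ}

lemma base_point {u : EE n → ℝ} (hu : ContDiffOn ℝ 2 u (Metric.ball 0 1))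
    (u0 : ∀ x ∈ Metric.ball (0 : EE n) 1, 0 ≤ u x) {r μ a : ℝ} (hr : r < 1) {x0 : EE n}
    (hx0 : ‖x0‖ < r) (hμ : u x0 < μ) (ha : a = 8 * μ / (1 - r) ^ 2) :
    ∃ x ∈ CS u a a, ‖x‖ ≤ (1 + r) / 2 := by
  set ρ := (1 - r) / 2 with hρ
  have hρ0 : 0 < ρ := by rw [hρ]; linarith
  have h1r : 0 < 1 - r := by linarith
  have hμ0 : 0 < μ := lt_of_le_of_lt (u0 x0 (by rw [mem_ball_zero_iff]; linarith)) hμ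
  have ha0 : 0 < a := by rw [ha]; positivity
  have haρ : a / 2 * ρ ^ 2 = μ := by rw [ha, hρ]; field_simp; norm_num
  have hnorm : ∀ z ∈ Metric.closedBall x0 ρ, ‖z‖ ≤ (1 + r) / 2 := by
    intro z hz
    rw [Metric.mem_closedBall, dist_eq_norm] at hz
    have := norm_add_le (z - x0) x0
    rw [sub_add_cancel] at this
    linarith
  have hsub : Metric.closedBall x0 ρ ⊆ Metric.ball 0 1 := by
    intro z hz
    rw [mem_ball_zero_iff]
    have := hnorm z hz
    linarith
  set w : EE n → ℝ := fun z => u z + a / 2 * ‖z - x0‖ ^ 2 with hw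
  have hwc : ContinuousOn w (Metric.closedBall x0 ρ) :=
    (hu.continuousOn.mono hsub).add (by fun_prop)
  obtain ⟨x, hx, hmin⟩ := (isCompact_closedBall x0 ρ).exists_isMinOn
    ⟨x0, Metric.mem_closedBall_self hρ0.le⟩ hwc
  have hx00 : w x ≤ u x0 := by
    have := hmin (Metric.mem_closedBall_self hρ0.le)
    simpa [hw] using this
  have hglob : ∀ z ∈ Metric.ball (0 : EE n) 1, w x ≤ w z := by
    intro z hz
    by_cases hzc : z ∈ Metric.closedBall x0 ρ
    · exact hmin hzc
    · rw [Metric.mem_closedBall, dist_eq_norm, not_le] at hzc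
      have e1 := u0 z hz
      have e2 : a / 2 * ρ ^ 2 ≤ a / 2 * ‖z - x0‖ ^ 2 := by gcongr
      simp only [hw] at hx00 ⊢
      linarith
  have hxb := hsub hx
  have hloc : IsLocalMin w x := by
    filter_upwards [Metric.isOpen_ball.mem_nhds hxb] with z hz using hglob z hz
  have hfd : HasFDerivAt w (toDual ℝ (EE n) (gradient u x) + (a / 2) • (2 • innerSL ℝ (x - x0))) x :=
    (hasGradientAt_of hu hxb).hasFDerivAt.add ((hasFDerivAt_normsq x0 x).const_mul (a / 2))
  have hz := hloc.hasFDerivAt_eq_zero hfd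
  have hgrad : gradient u x = -(a • (x - x0)) := by
    apply ext_inner_right ℝ
    intro e
    have := congrArg (fun L => L e) hz
    simp only [_root_.add_apply, _root_.smul_apply, toDual_apply_apply,
      innerSL_apply_apply, _root_.zero_apply, smul_eq_mul, nsmul_eq_mul] at this
    rw [inner_neg_left, real_inner_smul_left]
    push_cast at this
    linarith
  refine ⟨x, ⟨hxb, ?_, ?_⟩, hnorm x hx⟩
  · rw [hgrad, norm_neg, norm_smul, Real.norm_of_nonneg ha0.le]
    rw [Metric.mem_closedBall, dist_eq_norm] at hx
    have : ‖x - x0‖ ≤ 1 := by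
      have := norm_nonneg x0
      linarith
    nlinarith
  · intro z hz
    have e1 := hglob z hz
    have e2 : ‖z - x0‖ ^ 2 =
        ‖x - x0‖ ^ 2 + 2 * inner ℝ (x - x0) (z - x) + ‖z - x‖ ^ 2 := by
      rw [← norm_add_sq_real]; congr 2; abel
    simp only [hw] at e1
    rw [e2] at e1
    rw [hgrad, inner_neg_left, real_inner_smul_left]
    linarith

lemma iteration (hn : n ≠ 0) {lam Lam q K R : ℝ} (hlam : 0 < lam) (hLam : lam ≤ Lam)
    (hq : (n : ℝ) < q) (hK : 0 < K) (hR : R < 1) :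
    ∃ M β J : ℝ, 1 ≤ M ∧ 0 < β ∧ β < 1 ∧ 0 < J ∧ J ≤ 1 ∧
      ∀ b u : EE n → ℝ, Hyp n lam Lam q K b u → ∀ a : ℝ, 0 < a →
        (∃ x ∈ CS u a (J * a), ‖x‖ ≤ R) →
        ∀ k : ℕ, mD u (a * M ^ k) (a * M ^ k * J * β ^ k) ≤ vB n * (β ^ n) ^ k := by
  obtain ⟨M0, C2, c, C, hM0, hC2, hc, hc1, hC, H⟩ := step hn hlam hLam hq hK hR
  have hv := vB_pos (n := n)
  have hn1 : (1:ℝ) ≤ n := by exact_mod_cast Nat.one_le_iff_ne_zero.mpr hn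
  set β := 1 - c / (2 * n) with hβ
  have hcn : c / (2 * n) ≤ 1 / 2 := by
    rw [div_le_div_iff₀ (by positivity) (by norm_num)]; nlinarith
  have hβ0 : 0 < β := by rw [hβ]; linarith
  have hcn0 : 0 < c / (2 * n) := by positivity
  have hβ1 : β < 1 := by rw [hβ]; linarith
  have hβn : 1 - c / 2 ≤ β ^ n := by
    have := one_add_mul_le_pow (a := -(c / (2 * n))) (by linarith) n
    have e : 1 + (n : ℝ) * -(c / (2 * n)) = 1 - c / 2 := by field_simp; ring
    rw [e] at this
    rw [hβ, sub_eq_add_neg]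
    exact this
  set J := min 1 (c * vB n / (2 * C)) with hJ
  have hJ0 : 0 < J := lt_min one_pos (by positivity)
  have hJ1 : J ≤ 1 := min_le_left _ _
  have hJn : C * J ^ n ≤ c / 2 * vB n := by
    have e1 : J ^ n ≤ J := pow_le_of_le_one hJ0.le hJ1 hn
    have e2 : J ≤ c * vB n / (2 * C) := min_le_right _ _
    have e3 : C * J ^ n ≤ C * (c * vB n / (2 * C)) := by gcongr; exact e1.trans e2
    have e4 : C * (c * vB n / (2 * C)) = c / 2 * vB n := by field_simp
    linarith
  set M := max M0 ((J + C2) / (J * β)) with hM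
  have hMM0 : M0 ≤ M := le_max_left _ _
  have hM1 : 1 ≤ M := hM0.trans hMM0
  have hM2 : J + C2 ≤ M * (J * β) := by
    have := le_max_right M0 ((J + C2) / (J * β))
    rwa [div_le_iff₀ (by positivity)] at this
  refine ⟨M, β, J, hM1, hβ0, hβ1, hJ0, hJ1, fun b u h a ha ⟨x, hx, hxR⟩ k => ?_⟩
  have hMβ : 1 ≤ M * β := by
    by_contra hcon
    push Not at hcon
    nlinarith
  have hxk : ∀ k : ℕ, x ∈ CS u (a * M ^ k) (a * M ^ k * J * β ^ k) := by
    intro k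
    have e1 : 1 ≤ M ^ k := one_le_pow₀ hM1
    have e2 : 1 ≤ (M * β) ^ k := one_le_pow₀ hMβ
    refine CS_mono ?_ ?_ hx
    · nlinarith
    · have : a * M ^ k * J * β ^ k = J * a * (M * β) ^ k := by rw [mul_pow]; ring
      rw [this]
      have : 0 < J * a := by positivity
      nlinarith
  induction k with
  | zero => simpa using mD_le u _ _
  | succ k ih =>
    have hak : 0 < a * M ^ k := by positivity
    have hbk : 0 < β ^ k := by positivity
    have key := H b u h (a * M ^ k) (a * M ^ k * J * β ^ k) M (a * M ^ (k + 1) * J * β ^ (k + 1))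
      hak hMM0 ?_ ⟨x, hxk k, hxR⟩ ?_
    · have e1 : a * M ^ k * J * β ^ k / (a * M ^ k) = J * β ^ k := by field_simp
      have e2 : M * (a * M ^ k) = a * M ^ (k + 1) := by ring
      rw [e1, e2, mul_pow] at key
      refine key.trans ?_
      rw [pow_succ (β ^ n) k]
      have e3 : (β ^ k) ^ n = (β ^ n) ^ k := by rw [← pow_mul, ← pow_mul, mul_comm]
      rw [e3]
      have hbb : 0 < (β ^ n) ^ k := by positivity
      have e4 : (1 - c) * mD u (a * M ^ k) (a * M ^ k * J * β ^ k) ≤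
        (1 - c) * (vB n * (β ^ n) ^ k) := mul_le_mul_of_nonneg_left ih (by linarith)
      have e5 : C * J ^ n * (β ^ n) ^ k ≤ c / 2 * vB n * (β ^ n) ^ k := by gcongr
      have e6 : vB n * (β ^ n) ^ k * (1 - c / 2) ≤ vB n * (β ^ n) ^ k * β ^ n := by gcongr
      nlinarith
    · have e : a * M ^ (k + 1) * J * β ^ (k + 1) = a * M ^ k * J * β ^ k * (M * β) := by ring
      rw [e]
      have : 0 < a * M ^ k * J * β ^ k := by positivity
      nlinarith
    · intro d hd hdv
      have e1 : d ^ n ≤ (β ^ k) ^ n := by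
        have e3 : (β ^ k) ^ n = (β ^ n) ^ k := by rw [← pow_mul, ← pow_mul, mul_comm]
        rw [e3]
        have := hdv.trans ih
        rw [mul_comm] at this
        exact le_of_mul_le_mul_left this hv
      have e2 : d ≤ β ^ k := le_of_pow_le_pow_left₀ hn hbk.le e1
      have e3 : a * M ^ (k + 1) * J * β ^ (k + 1) = a * M ^ k * β ^ k * (M * (J * β)) := by ring
      rw [e3]
      have e4 : a * M ^ k * β ^ k * (J + C2) ≤ a * M ^ k * β ^ k * (M * (J * β)) := by gcongr
      have e5 : C2 * (a * M ^ k) * d ≤ C2 * (a * M ^ k) * β ^ k := by gcongr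
      nlinarith

lemma CS_pucci {lam Lam : ℝ} (hlam : 0 < lam) (hLam : lam ≤ Lam) {u : EE n → ℝ}
    (hu : ContDiffOn ℝ 2 u (Metric.ball 0 1)) {a G : ℝ} (ha : 0 ≤ a) {x : EE n}
    (hx : x ∈ CS u a G) : -(a * (n * Lam)) ≤ pucciMinus n lam Lam (hess n u x) := by
  apply pucci_lower hlam.le hLam ha
  have hxb := hx.1
  have hid : Mat (a • ContinuousLinearMap.id ℝ (EE n)) = a • (1 : Matrix (Fin n) (Fin n) ℝ) := by
    rw [Mat_smul]
    congr 1
    ext i j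
    simp [Mat, EuclideanSpace.inner_single_right, Matrix.one_apply, eq_comm]
  have hadd : hess n u x + a • (1 : Matrix (Fin n) (Fin n) ℝ) =
      Mat (fderiv ℝ (gradient u) x + a • ContinuousLinearMap.id ℝ (EE n)) := by
    rw [← hid, hess_eq_Mat hu hxb]
    ext i j
    simp [Mat, inner_add_left]
  rw [hadd]
  apply Mat_psd
  · intro e f
    simp only [_root_.add_apply, inner_add_left, _root_.smul_apply,
      ContinuousLinearMap.id_apply, real_inner_smul_left]
    rw [grad_symm hu hxb e f, real_inner_comm e f]
  · intro e
    set w : EE n → ℝ := fun z => u z + a / 2 * ‖z - x‖ ^ 2 - inner ℝ (gradient u x) (z - x) with hw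
    refine second_order (w := w) (F := fun z => gradient u z + a • (z - x) - gradient u x)
      (x := x) ?_ ?_ ?_ e
    · filter_upwards [Metric.isOpen_ball.mem_nhds hxb] with z hz
      have := hx.2.2 z hz
      have hwx : w x = u x := by
        simp only [hw, sub_self, norm_zero, inner_zero_right]
        ring
      rw [hwx]
      simp only [hw]
      linarith
    · filter_upwards [Metric.isOpen_ball.mem_nhds hxb] with y hy
      rw [hasGradientAt_iff_hasFDerivAt]
      have h1 : HasFDerivAt (fun z => inner ℝ (gradient u x) (z - x))
          (innerSL ℝ (gradient u x)) y :=
        (innerSL ℝ (gradient u x)).hasFDerivAt.comp y ((hasFDerivAt_id y).sub_const x)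
      have h2 := ((hasGradientAt_of hu hy).hasFDerivAt.add
        ((hasFDerivAt_normsq x y).const_mul (a / 2))).sub h1
      refine h2.congr_fderiv ?_
      ext e
      simp
      ring
    · exact ((hasFDerivAt_grad hu hxb).add
        (((hasFDerivAt_id x).sub_const x).const_smul a)).sub_const _

end QSMP
namespace QSMP

open InnerProductSpace Filter Topology

variable {n : ℕ}

lemma Hyp.int_one_add {lam Lam q K : ℝ} {b u : EE n → ℝ} (h : Hyp n lam Lam q K b u)
    (hn : n ≠ 0) (hq : (n : ℝ) < q) (hK : 0 < K) :
    ∫⁻ x in Metric.ball (0 : EE n) 1, ENNReal.ofReal (1 + b x) ≤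
      ENNReal.ofReal (3 * vB n + K ^ q) := by
  have hv := vB_pos (n := n)
  calc ∫⁻ x in Metric.ball (0 : EE n) 1, ENNReal.ofReal (1 + b x)
      ≤ ∫⁻ x in Metric.ball (0 : EE n) 1, (ENNReal.ofReal 2 + ENNReal.ofReal (b x ^ n)) := by
        apply setLIntegral_mono' measurableSet_ball
        intro x hx
        have hb := h.b0 x hx
        rw [← ENNReal.ofReal_add (by norm_num) (by positivity)]
        apply ENNReal.ofReal_le_ofReal
        rcases le_total (b x) 1 with h1 | h1
        · have : 0 ≤ b x ^ n := by positivity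
          linarith
        · have := le_self_pow₀ h1 hn
          linarith
    _ = ENNReal.ofReal 2 * volume (Metric.ball (0 : EE n) 1) +
          ∫⁻ x in Metric.ball (0 : EE n) 1, ENNReal.ofReal (b x ^ n) := by
        rw [lintegral_add_left measurable_const, setLIntegral_const]
    _ ≤ ENNReal.ofReal 2 * volume (Metric.ball (0 : EE n) 1) +
          (ENNReal.ofReal (1 ^ n) * volume (Metric.ball (0 : EE n) 1) +
            ENNReal.ofReal (1 ^ ((n : ℝ) - q) * K ^ q)) :=
        add_le_add le_rfl (h.int_bn hq hK one_pos measurableSet_ball subset_rfl)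
    _ = _ := by
        rw [vol_unit, ← ENNReal.ofReal_mul (by positivity), ← ENNReal.ofReal_mul (by positivity),
          ← ENNReal.ofReal_add (by positivity) (by positivity),
          ← ENNReal.ofReal_add (by positivity) (by positivity)]
        congr 1
        simp
        ring

set_option maxHeartbeats 1000000 in
lemma final_est (hn : n ≠ 0) {lam Lam q K r : ℝ} (hlam : 0 < lam) (hLam : lam ≤ Lam)
    (hq : (n : ℝ) < q) (hK : 0 < K) (hr : r < 1) :
    ∃ ε C : ℝ, 0 < ε ∧ 0 < C ∧ ∀ b u : EE n → ℝ, Hyp n lam Lam q K b u →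
      ∀ x0 : EE n, ‖x0‖ < r → ∀ μ : ℝ, u x0 < μ →
        (∫⁻ x in Metric.ball (0 : EE n) 1, ENNReal.ofReal
          ((-(pucciMinus n lam Lam (hess n u x) - b x * gradNorm n u x)) ^ ε)) ^ (1 / ε)
          ≤ ENNReal.ofReal (C * μ) := by
  obtain ⟨M, β, J, hM, hβ0, hβ1, hJ0, hJ1, H⟩ :=
    iteration hn hlam hLam hq hK (R := (1 + r) / 2) (by linarith)
  have hv := vB_pos (n := n)
  have hLam0 : 0 < Lam := hlam.trans_le hLam
  have h1r : 0 < 1 - r := by linarith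
  have hM0 : 0 < M := by linarith
  obtain ⟨ε, hε0, hε1, hε2⟩ : ∃ ε : ℝ, 0 < ε ∧ ε ≤ 1 / 2 ∧ (M ^ ε) ^ 2 * β ^ n < 1 := by
    have hlim : Tendsto (fun ε : ℝ => (M ^ ε) ^ 2 * β ^ n) (𝓝[>] 0)
        (𝓝 ((M ^ (0 : ℝ)) ^ 2 * β ^ n)) := by
      apply Tendsto.mono_left _ nhdsWithin_le_nhds
      exact (((Real.continuous_const_rpow hM0.ne').pow 2).mul continuous_const).tendsto 0
    rw [Real.rpow_zero, one_pow, one_mul] at hlim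
    have hbn : β ^ n < 1 := pow_lt_one₀ hβ0.le hβ1 hn
    obtain ⟨ε, ⟨h1, h2⟩, h3⟩ := (((hlim.eventually (gt_mem_nhds hbn)).and
      self_mem_nhdsWithin).and
      (nhdsWithin_le_nhds (ge_mem_nhds (by norm_num : (0 : ℝ) < 1 / 2)))).exists
    exact ⟨ε, h2, h3, h1⟩
  set τ := (M ^ ε) ^ 2 with hτ
  have hMε : 1 ≤ M ^ ε := Real.one_le_rpow hM hε0.le
  have hτ1 : 1 ≤ τ := one_le_pow₀ hMε
  have hτβ0 : 0 < τ * β ^ n := by positivity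
  set A := n * Lam + 1 with hA
  have hA0 : 0 < A := by positivity
  set Ct := 3 * vB n + K ^ q + vB n * (1 - τ * β ^ n)⁻¹ with hCt
  have hinv : 0 < (1 - τ * β ^ n)⁻¹ := inv_pos.mpr (by linarith)
  have hCt0 : 0 < Ct := by positivity
  set B := 8 / (1 - r) ^ 2 / J * A * M with hB
  have hB0 : 0 < B := by positivity
  refine ⟨ε, B * Ct ^ (1 / ε), hε0, by positivity, fun b u h x0 hx0 μ hμ => ?_⟩
  have hμ0 : 0 < μ := lt_of_le_of_lt (h.u0 x0 (by rw [mem_ball_zero_iff]; linarith)) hμ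
  obtain ⟨xs, hxs, hxsR⟩ := base_point h.hu h.u0 hr hx0 hμ rfl
  set as := 8 * μ / (1 - r) ^ 2 with has
  have has0 : 0 < as := by positivity
  set a := as / J with ha
  have ha0 : 0 < a := by positivity
  have hJa : J * a = as := by rw [ha]; field_simp
  have hle : as ≤ a := by rw [← hJa]; nlinarith
  have Hk := H b u h a ha0 ⟨xs, by rw [hJa]; exact CS_mono hle le_rfl hxs, hxsR⟩
  set S : ℕ → Set (EE n) := fun k => CS u (a * M ^ k) (a * M ^ k * J * β ^ k) with hS
  set D : ℕ → Set (EE n) := fun k => Metric.ball (0 : EE n) 1 \ S k with hD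
  have hDm : ∀ k, MeasurableSet (D k) := fun k => measurableSet_ball.diff (CS_meas h.hu)
  have hDv : ∀ k, volume (D k) ≤ ENNReal.ofReal (vB n * (β ^ n) ^ k) := by
    intro k
    rw [← ENNReal.ofReal_toReal (vol_D_ne_top u (a * M ^ k) (a * M ^ k * J * β ^ k))]
    exact ENNReal.ofReal_le_ofReal (Hk k)
  set f : EE n → ℝ := fun x => -(pucciMinus n lam Lam (hess n u x) - b x * gradNorm n u x) with hf
  have hf0 : ∀ x ∈ Metric.ball (0 : EE n) 1, 0 ≤ f x := by
    intro x hx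
    have := h.hP x hx
    simp only [hf]; linarith
  have hfS : ∀ k, ∀ x ∈ S k, f x ≤ a * A * M ^ k * (1 + b x) := by
    intro k x hx
    have hak : 0 < a * M ^ k := by positivity
    have hb := h.b0 x hx.1
    have e1 := CS_pucci hlam hLam h.hu hak.le hx
    have e2 := hx.2.1
    have e3 : a * M ^ k * J * β ^ k ≤ a * M ^ k := by
      have h1 : β ^ k ≤ 1 := pow_le_one₀ hβ0.le hβ1.le
      have h2 : J * β ^ k ≤ 1 := mul_le_one₀ hJ1 (by positivity) h1
      calc a * M ^ k * J * β ^ k = a * M ^ k * (J * β ^ k) := by ring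
        _ ≤ a * M ^ k * 1 := by gcongr
        _ = _ := mul_one _
    have e4 : b x * ‖gradient u x‖ ≤ b x * (a * M ^ k) := by gcongr; exact e2.trans e3
    simp only [hf]
    rw [gradNorm_eq, hA]
    have hnL : 0 ≤ n * Lam := by positivity
    have e5 : 0 ≤ a * M ^ k * (n * Lam) * b x := by positivity
    nlinarith
  set W := (a * A * M) ^ ε with hW
  have hW0 : 0 < W := by positivity
  have hpt : ∀ x ∈ Metric.ball (0 : EE n) 1, ENNReal.ofReal (f x ^ ε) ≤
      ENNReal.ofReal W * (ENNReal.ofReal (1 + b x) +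
        ∑' j, (D j).indicator (fun _ => ENNReal.ofReal (τ ^ j)) x) := by
    intro x hx
    have hb := h.b0 x hx
    have hb1 : 1 ≤ 1 + b x := by linarith
    by_cases hex : ∃ k, x ∈ S k
    · classical
      have hk := Nat.find_spec hex
      have hmin := fun m => Nat.find_min hex (m := m)
      set k := Nat.find hex with hkd
      rcases Nat.eq_zero_or_pos k with h0 | hpos
      · rw [h0] at hk
        have e1 := hfS 0 x hk
        rw [pow_zero, mul_one] at e1
        have e2 : f x ^ ε ≤ W * (1 + b x) := by
          calc f x ^ ε ≤ (a * A * M * (1 + b x)) ^ ε := by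
                apply Real.rpow_le_rpow (hf0 x hx) _ hε0.le
                refine e1.trans ?_
                have h7 : a * A ≤ a * A * M := le_mul_of_one_le_right (by positivity) hM
                exact mul_le_mul_of_nonneg_right h7 (by positivity)
            _ = W * (1 + b x) ^ ε := Real.mul_rpow (by positivity) (by positivity)
            _ ≤ W * (1 + b x) := by
                gcongr
                calc (1 + b x) ^ ε ≤ (1 + b x) ^ (1 : ℝ) :=
                      Real.rpow_le_rpow_of_exponent_le hb1 (by linarith)
                  _ = _ := Real.rpow_one _
        calc ENNReal.ofReal (f x ^ ε) ≤ ENNReal.ofReal (W * (1 + b x)) :=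
              ENNReal.ofReal_le_ofReal e2
          _ = ENNReal.ofReal W * ENNReal.ofReal (1 + b x) := ENNReal.ofReal_mul hW0.le
          _ ≤ _ := mul_le_mul_right le_self_add _
      · obtain ⟨j, hj⟩ : ∃ j, k = j + 1 := ⟨k - 1, by omega⟩
        have hxD : x ∈ D j := ⟨hx, hmin j (by omega)⟩
        rw [hj] at hk
        have e1 := hfS (j + 1) x hk
        have e2 : f x ^ ε ≤ W * ((1 + b x) + τ ^ j) := by
          calc f x ^ ε ≤ (a * A * M * (M ^ j * (1 + b x))) ^ ε := by
                apply Real.rpow_le_rpow (hf0 x hx) _ hε0.le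
                refine e1.trans (le_of_eq ?_)
                ring
            _ = W * ((M ^ j) ^ ε * (1 + b x) ^ ε) := by
                rw [Real.mul_rpow (x := a * A * M) (by positivity) (by positivity),
                  Real.mul_rpow (x := M ^ j) (by positivity) (by positivity)]
            _ ≤ W * ((1 + b x) + τ ^ j) := by
                gcongr
                have e3 : ((1 + b x) ^ ε) ^ 2 ≤ 1 + b x := by
                  rw [← Real.rpow_natCast, ← Real.rpow_mul (by positivity)]
                  calc (1 + b x) ^ (ε * ((2 : ℕ) : ℝ)) ≤ (1 + b x) ^ (1 : ℝ) :=
                        Real.rpow_le_rpow_of_exponent_le hb1 (by push_cast; linarith)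
                    _ = _ := Real.rpow_one _
                have e4 : ((M ^ j) ^ ε) ^ 2 = τ ^ j := by
                  rw [hτ, ← pow_mul, mul_comm 2 j, pow_mul]
                  congr 1
                  rw [← Real.rpow_natCast, ← Real.rpow_natCast, ← Real.rpow_mul hM0.le,
                    ← Real.rpow_mul hM0.le, mul_comm]
                nlinarith [sq_nonneg ((M ^ j) ^ ε - (1 + b x) ^ ε),
                  sq_nonneg ((M ^ j) ^ ε + (1 + b x) ^ ε)]
        calc ENNReal.ofReal (f x ^ ε) ≤ ENNReal.ofReal (W * ((1 + b x) + τ ^ j)) :=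
              ENNReal.ofReal_le_ofReal e2
          _ = ENNReal.ofReal W * (ENNReal.ofReal (1 + b x) + ENNReal.ofReal (τ ^ j)) := by
              rw [ENNReal.ofReal_mul hW0.le, ENNReal.ofReal_add (by positivity) (by positivity)]
          _ ≤ _ := by
              refine mul_le_mul_right (add_le_add le_rfl ?_) _
              refine le_trans (le_of_eq ?_) (ENNReal.le_tsum j)
              rw [Set.indicator_of_mem hxD]
    · push Not at hex
      have htop : ∑' j, (D j).indicator (fun _ => ENNReal.ofReal (τ ^ j)) x = ⊤ := by
        rw [eq_top_iff, ← ENNReal.tsum_const_eq_top_of_ne_zero (α := ℕ) one_ne_zero]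
        apply ENNReal.tsum_le_tsum
        intro j
        have hxj : x ∈ D j := ⟨hx, hex j⟩
        rw [Set.indicator_of_mem hxj]
        rw [ENNReal.one_le_ofReal]
        exact one_le_pow₀ hτ1
      rw [htop, add_top, ENNReal.mul_top (by simpa using hW0)]
      exact le_top
  have hint : ∫⁻ x in Metric.ball (0 : EE n) 1, ENNReal.ofReal (f x ^ ε) ≤
      ENNReal.ofReal (W * Ct) := by
    calc ∫⁻ x in Metric.ball (0 : EE n) 1, ENNReal.ofReal (f x ^ ε)
        ≤ ∫⁻ x in Metric.ball (0 : EE n) 1, ENNReal.ofReal W * (ENNReal.ofReal (1 + b x) +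
          ∑' j, (D j).indicator (fun _ => ENNReal.ofReal (τ ^ j)) x) :=
          setLIntegral_mono' measurableSet_ball hpt
      _ = ENNReal.ofReal W * ((∫⁻ x in Metric.ball (0 : EE n) 1, ENNReal.ofReal (1 + b x)) +
          ∑' j, ∫⁻ x in Metric.ball (0 : EE n) 1,
            (D j).indicator (fun _ => ENNReal.ofReal (τ ^ j)) x) := by
          have hm : ∀ j, Measurable ((D j).indicator (fun _ => ENNReal.ofReal (τ ^ j))) :=
            fun j => measurable_const.indicator (hDm j)
          rw [lintegral_const_mul' _ _ ENNReal.ofReal_ne_top,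
            lintegral_add_right _ (Measurable.tsum hm),
            lintegral_tsum (fun j => (hm j).aemeasurable)]
      _ ≤ ENNReal.ofReal W * (ENNReal.ofReal (3 * vB n + K ^ q) +
          ∑' j : ℕ, ENNReal.ofReal (vB n * (τ * β ^ n) ^ j)) := by
          refine mul_le_mul_right (add_le_add (h.int_one_add hn hq hK) ?_) _
          apply ENNReal.tsum_le_tsum
          intro j
          rw [lintegral_indicator (hDm j), setLIntegral_const]
          have e1 : vB n * (τ * β ^ n) ^ j = τ ^ j * (vB n * (β ^ n) ^ j) := by
            rw [mul_pow]; ring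
          rw [e1, ENNReal.ofReal_mul (by positivity)]
          exact mul_le_mul_right ((Measure.restrict_apply_le _ _).trans (hDv j)) _
      _ = _ := by
          have hs : HasSum (fun j : ℕ => vB n * (τ * β ^ n) ^ j) (vB n * (1 - τ * β ^ n)⁻¹) :=
            (hasSum_geometric_of_lt_one hτβ0.le hε2).mul_left _
          rw [← ENNReal.ofReal_tsum_of_nonneg (fun j => by positivity) hs.summable, hs.tsum_eq,
            ← ENNReal.ofReal_add (by positivity) (by positivity), ← ENNReal.ofReal_mul hW0.le]
  calc _ ≤ (ENNReal.ofReal (W * Ct)) ^ (1 / ε) := ENNReal.rpow_le_rpow hint (by positivity)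
    _ = ENNReal.ofReal ((W * Ct) ^ (1 / ε)) := ENNReal.ofReal_rpow_of_pos (by positivity)
    _ = _ := by
      congr 1
      rw [Real.mul_rpow hW0.le hCt0.le, hW, ← Real.rpow_mul (by positivity),
        mul_one_div_cancel hε0.ne', Real.rpow_one]
      rw [hB, ha, has]
      ring

end QSMP
/-- Interior quantitative strong maximum principle. -/
theorem interior_quantitative_strong_maximum_principle
    (n : ℕ) (hn : 2 ≤ n) (lam Lam : ℝ) (hlam : 0 < lam) (hLam : lam ≤ Lam)
    (q K : ℝ) (hq : (n : ℝ) < q) (hK : 0 < K)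
    (r : ℝ) (hr0 : 0 < r) (hr1 : r < 1) :
    ∃ ε c : ℝ, 0 < ε ∧ 0 < c ∧
      ∀ b u : EuclideanSpace ℝ (Fin n) → ℝ,
        ContinuousOn b (Metric.ball 0 1) →
        (∀ x ∈ Metric.ball (0 : EuclideanSpace ℝ (Fin n)) 1, 0 ≤ b x) →
        LpNormE n q b (Metric.ball 0 1) ≤ ENNReal.ofReal K →
        ContDiffOn ℝ 2 u (Metric.ball 0 1) →
        (∀ x ∈ Metric.ball (0 : EuclideanSpace ℝ (Fin n)) 1, 0 ≤ u x) →
        (∀ x ∈ Metric.ball (0 : EuclideanSpace ℝ (Fin n)) 1,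
          pucciMinus n lam Lam (hess n u x) - b x * gradNorm n u x ≤ 0) →
        ENNReal.ofReal c *
            (∫⁻ x in Metric.ball (0 : EuclideanSpace ℝ (Fin n)) 1,
              ENNReal.ofReal
                ((-(pucciMinus n lam Lam (hess n u x) - b x * gradNorm n u x)) ^ ε)) ^ (1 / ε)
          ≤ ENNReal.ofReal (⨅ x : Metric.ball (0 : EuclideanSpace ℝ (Fin n)) r, u x.1) := by
  obtain ⟨ε, C, hε, hC, H⟩ := QSMP.final_est (n := n) (by omega) hlam hLam hq hK hr1
  refine ⟨ε, 1 / C, hε, by positivity, fun b u bc b0 bL hu u0 hP => ?_⟩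
  have h : QSMP.Hyp n lam Lam q K b u := ⟨bc, b0, bL, hu, u0, hP⟩
  have key : ∀ x ∈ Metric.ball (0 : EuclideanSpace ℝ (Fin n)) r, ∀ μ : ℝ, u x < μ →
      ENNReal.ofReal (1 / C) *
            (∫⁻ x in Metric.ball (0 : EuclideanSpace ℝ (Fin n)) 1,
              ENNReal.ofReal
                ((-(pucciMinus n lam Lam (hess n u x) - b x * gradNorm n u x)) ^ ε)) ^ (1 / ε)
          ≤ ENNReal.ofReal μ := by
    intro x hx μ hμ
    refine (mul_le_mul_right (H b u h x (by rwa [mem_ball_zero_iff] at hx) μ hμ) _).trans ?_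
    rw [← ENNReal.ofReal_mul (by positivity)]
    apply ENNReal.ofReal_le_ofReal
    apply le_of_eq
    field_simp
  set T := ENNReal.ofReal (1 / C) *
            (∫⁻ x in Metric.ball (0 : EuclideanSpace ℝ (Fin n)) 1,
              ENNReal.ofReal
                ((-(pucciMinus n lam Lam (hess n u x) - b x * gradNorm n u x)) ^ ε)) ^ (1 / ε)
    with hT
  have h0 : (0 : EuclideanSpace ℝ (Fin n)) ∈ Metric.ball (0 : EuclideanSpace ℝ (Fin n)) r :=
    Metric.mem_ball_self hr0
  have hTtop : T ≠ ⊤ :=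
    ((key 0 h0 (u 0 + 1) (by linarith)).trans_lt ENNReal.ofReal_lt_top).ne
  have : Nonempty (Metric.ball (0 : EuclideanSpace ℝ (Fin n)) r) := ⟨⟨0, h0⟩⟩
  rw [← ENNReal.ofReal_toReal hTtop]
  apply ENNReal.ofReal_le_ofReal
  apply le_ciInf
  rintro ⟨x, hx⟩
  apply le_of_forall_gt_imp_ge_of_dense
  intro μ hμ
  have hx1 : x ∈ Metric.ball (0 : EuclideanSpace ℝ (Fin n)) 1 :=
    Metric.ball_subset_ball hr1.le hx
  have hμ0 : 0 ≤ μ := (u0 x hx1).trans (le_of_lt hμ)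
  exact ENNReal.toReal_le_of_le_ofReal hμ0 (key x hx μ hμ)
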